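/- arXiv:2511.14026 — 2 statements merged into one kernel-verified Lean document; each statement's English description precedes it below -/
import Mathlib

section
/- (Gaussian interpolation formula.) Let Y(0) = (Y_1(0),…,Y_n(0)) and Y(1) = (Y_1(1),…,Y_n(1)) be independent centered Gaussian vectors in ℝⁿ with covariance matrices Λ(0) and Λ(1) satisfying Λ_ii(0) = Λ_ii(1) = 1 for all i. For h ∈ [0,1] set Y(h) = √h · Y(1) + √(1−h) · Y(0), and let Λ(h) = Cov(Y(h)) = (1−h)Λ(0) + hΛ(1). Let F ∈ C²(ℝⁿ, ℝ) satisfy the growth condition |F(x)| + ‖∇F(x)‖ + ‖Hess F(x)‖ ≤ C(1+‖x‖)^m for some constants C < ∞ and m ∈ ℕ (with ‖·‖ the max-norm). Then the map h ↦ E[F(Y(h))] is continuously differentiable on [0,1] and E[F(Y(1)) − F(Y(0))] = (1/2) ∑_{i,j=1}^{n} ∫₀¹ (Λ_ij(1) − Λ_ij(0)) · E[∂²_{ij} F(Y(h))] dh, where ∂²_{ij}F denote the entries of the Hessian of F. -/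
open MeasureTheory ProbabilityTheory Real

/-- `X` is a centered Gaussian vector (indexed by `ι`) under `P` with covariance matrix `Λ`:
every linear functional of `X` is a centered real Gaussian with the variance prescribed
by the quadratic form of `Λ`. -/
def IsCenteredGaussianVector {Ω ι : Type*} [MeasurableSpace Ω] [Fintype ι]
    (P : Measure Ω) (X : Ω → ι → ℝ) (Λ : ι → ι → ℝ) : Prop :=
  Measurable X ∧
    ∀ c : ι → ℝ,
      P.map (fun ω => ∑ i, c i * X ω i) =
        ProbabilityTheory.gaussianReal 0 (∑ i, ∑ j, c i * c j * Λ i j).toNNReal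

/-!
Put `φ h = E[F(Y(h))]`. For `0 < h < 1` one may differentiate under the expectation
(`hasDerivAt_integral_interp`), which gives
`φ' h = ∑ i, E[∂ᵢF(Y(h)) (Y₁ i / (2√h) - Y₀ i / (2√(1 - h)))]`.
Gaussian integration by parts (`gaussian_integration_by_parts`),
`E[Z G(Y)] = ∑ j, Cov(Z, Y j) E[∂ⱼG(Y)]`, applied to `Z = Y₁ i` and `Z = Y₀ i`, both standard normal
by the unit diagonals, cancels the singular factors and yields `φ' = ψ` on `(0, 1)`, where
`ψ h = ½ ∑ i j, (Λ1 i j - Λ0 i j) E[∂ᵢⱼF(Y(h))]` (`hasDerivAt_gaussian_interp`).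
Both `φ` and `ψ` are continuous by dominated convergence (`continuous_integral_interp`), so
`φ h = φ 0 + ∫₀ʰ ψ` on `[0, 1]`; this gives the `C¹` regularity up to the endpoints, and the formula
at `h = 1`.

The integration by parts is reduced to Stein's identity on `ℝ` by splitting `Y` into its
regression on `Z` and an independent remainder. All integrability comes from the fact that
Gaussian vectors have moments of every order.
-/

/-! ### Stein's identity and Gaussian integration by parts -/

/-- Continuous functions of polynomial growth are integrable along a Gaussian vector, since such a
vector has moments of all orders. -/
lemma integrable_comp_of_growth {Ω E F : Type*} [MeasurableSpace Ω] {P : Measure Ω}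
    [NormedAddCommGroup E] [NormedSpace ℝ E] [MeasurableSpace E] [BorelSpace E]
    [CompleteSpace E] [SecondCountableTopology E] [NormedAddCommGroup F]
    {X : Ω → E} (hX : HasGaussianLaw X P) {f : E → F} (hf : Continuous f) {C : ℝ} {m : ℕ}
    (hC : ∀ x, ‖f x‖ ≤ C * (1 + ‖x‖) ^ m) :
    Integrable (fun ω => f (X ω)) P := by
  have := hX.isProbabilityMeasure
  have hm := hX.memLp (ENNReal.natCast_ne_top (m + 1))
  have h1 : MemLp (fun ω => 1 + ‖X ω‖) ((m + 1 : ℕ) : ENNReal) P :=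
    MemLp.add (memLp_const (1 : ℝ)) hm.norm
  have h2 := h1.integrable_norm_pow m.succ_ne_zero
  refine (h2.const_mul |C|).mono' (hf.comp_aestronglyMeasurable
    hX.aemeasurable.aestronglyMeasurable) (.of_forall fun ω => (hC _).trans ?_)
  have h0 : (1 : ℝ) ≤ 1 + ‖X ω‖ := by simp
  rw [Real.norm_of_nonneg (by positivity)]
  exact mul_le_mul (le_abs_self C) (pow_le_pow_right₀ h0 (by simp)) (by positivity) (by positivity)

/-- Stein's identity for the standard Gaussian measure: integration by parts against its density
`φ`, which satisfies `φ' z = -z φ z`. -/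
lemma integral_id_mul_gaussianReal {g g' : ℝ → ℝ} (hg : ∀ z, HasDerivAt g (g' z) z)
    (h0 : Integrable g (gaussianReal 0 1)) (h1 : Integrable (fun z => z * g z) (gaussianReal 0 1))
    (h2 : Integrable g' (gaussianReal 0 1)) :
    ∫ z, z * g z ∂gaussianReal 0 1 = ∫ z, g' z ∂gaussianReal 0 1 := by
  have hI : ∀ f : ℝ → ℝ, Integrable f (gaussianReal 0 1) →
      Integrable (fun z => gaussianPDFReal 0 1 z * f z) := by
    intro f hf
    rw [gaussianReal_of_var_ne_zero _ one_ne_zero, integrable_withDensity_iff_integrable_smul'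
      (measurable_gaussianPDF 0 1) (.of_forall fun _ => gaussianPDF_lt_top)] at hf
    simpa using hf
  have hφ : ∀ z, HasDerivAt (gaussianPDFReal 0 1) (-z * gaussianPDFReal 0 1 z) z := by
    intro z
    rw [gaussianPDFReal_def]
    have h : HasDerivAt (fun z : ℝ => -(z - 0) ^ 2 / (2 * ((1 : NNReal) : ℝ))) (-z) z := by
      convert! ((((hasDerivAt_id z).sub_const 0).pow 2).neg.div_const
        (2 * ((1 : NNReal) : ℝ))) using 1
      simp
      ring
    convert! h.exp.const_mul (√(2 * π * ((1 : NNReal) : ℝ)))⁻¹ using 1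
    ring
  rw [integral_gaussianReal_eq_integral_smul one_ne_zero,
    integral_gaussianReal_eq_integral_smul one_ne_zero]
  simp only [smul_eq_mul]
  rw [integral_mul_deriv_eq_deriv_mul_of_integrable (fun z _ => hφ z) (fun z _ => hg z) (hI _ h2)
    ((hI _ h1).neg.congr (.of_forall fun z => by simp; ring)) (hI _ h0), ← integral_neg]
  exact integral_congr_ae (.of_forall fun z => by simp; ring)

/-- Gaussian integration by parts. If `(Z, Y)` is jointly Gaussian with `Z` standard normal, then
`U = Y - Z a` with `a j = Cov(Z, Y j)` is uncorrelated with `Z`, hence independent of it, and the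
identity reduces by Fubini to Stein's identity for `z ↦ G (u + z a)` with `u` fixed. -/
lemma gaussian_integration_by_parts {Ω : Type*} [MeasurableSpace Ω] {P : Measure Ω} {n : ℕ}
    {Z : Ω → ℝ} {Y : Ω → Fin n → ℝ} (hZY : HasGaussianLaw (fun ω => (Z ω, Y ω)) P)
    (hZ : P.map Z = gaussianReal 0 1) {G : (Fin n → ℝ) → ℝ} (hG : ContDiff ℝ 1 G) {C : ℝ} {m : ℕ}
    (h0 : ∀ x, ‖G x‖ ≤ C * (1 + ‖x‖) ^ m) (h1 : ∀ x, ‖fderiv ℝ G x‖ ≤ C * (1 + ‖x‖) ^ m) :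
    ∫ ω, Z ω * G (Y ω) ∂P =
      ∑ j, cov[Z, fun ω => Y ω j; P] * ∫ ω, fderiv ℝ G (Y ω) (Pi.single j 1) ∂P := by
  have := hZY.isProbabilityMeasure
  set a : Fin n → ℝ := fun j => cov[Z, fun ω => Y ω j; P] with ha
  have hCpos : 0 ≤ C := by simpa using (norm_nonneg _).trans (h0 0)
  have hGc := hG.continuous
  have hDc : Continuous (fderiv ℝ G) := hG.continuous_fderiv one_ne_zero
  have hY := hZY.snd
  have hZ' := hZY.fst
  have hYj : ∀ j, MemLp (fun ω => Y ω j) 2 P := fun j => (hY.eval j).memLp_two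
  have hvar : Var[Z; P] = 1 := by
    have h := variance_map (X := id) (Y := Z) (μ := P) (by fun_prop) hZ'.aemeasurable
    rw [hZ, variance_id_gaussianReal] at h
    simpa using h.symm
  have hUZ : HasGaussianLaw (fun ω => (Y ω - Z ω • a, Z ω)) P := by
    exact hZY.map_fun ((ContinuousLinearMap.snd ℝ ℝ (Fin n → ℝ) -
      (ContinuousLinearMap.fst ℝ ℝ (Fin n → ℝ)).smulRight a).prod
      (ContinuousLinearMap.fst ℝ ℝ (Fin n → ℝ)))
  have hind : IndepFun (fun ω => Y ω - Z ω • a) Z P := by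
    have hg : HasGaussianLaw
        (fun ω => (fun j => (Y ω - Z ω • a) j, fun _ : Fin 1 => Z ω)) P := by
      let L : ((Fin n → ℝ) × ℝ) →L[ℝ] (Fin n → ℝ) × (Fin 1 → ℝ) :=
        (ContinuousLinearMap.fst ℝ (Fin n → ℝ) ℝ).prod
          (ContinuousLinearMap.pi fun _ => ContinuousLinearMap.snd ℝ (Fin n → ℝ) ℝ)
      exact hUZ.map_fun L
    have hi := HasGaussianLaw.indepFun_of_covariance_eval
      (X := fun j ω => (Y ω - Z ω • a) j) (Y := fun _ : Fin 1 => Z) hg (fun j _ => by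
        have e : (fun ω => (Y ω - Z ω • a) j) = (fun ω => Y ω j) - a j • Z := by
          ext ω; simp [mul_comm]
        rw [covariance_comm, e, covariance_sub_right hZ'.memLp_two (hYj j)
          (hZ'.memLp_two.const_smul _), covariance_smul_right, covariance_self hZ'.aemeasurable,
          hvar]
        simp [ha])
    exact hi.comp (φ := id) (ψ := fun v : Fin 1 → ℝ => v 0) measurable_id (by fun_prop)
  have hU := hUZ.fst
  set μ := P.map (fun ω => Y ω - Z ω • a) with hμ
  have hμP : IsProbabilityMeasure μ := Measure.isProbabilityMeasure_map hU.aemeasurable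
  have hlaw : P.map (fun ω => (Y ω - Z ω • a, Z ω)) = μ.prod (gaussianReal 0 1) := by
    rw [(indepFun_iff_map_prod_eq_prod_map_map hU.aemeasurable hZ'.aemeasurable).1 hind, hZ]
  -- Continuous functions of `(Z, Y)` of polynomial growth become iterated integrals.
  have key : ∀ H : ℝ × (Fin n → ℝ) → ℝ, Continuous H →
      Integrable (fun ω => H (Z ω, Y ω)) P →
      Integrable (fun p : (Fin n → ℝ) × ℝ => H (p.2, p.1 + p.2 • a)) (μ.prod (gaussianReal 0 1)) ∧
      ∫ ω, H (Z ω, Y ω) ∂P = ∫ u, ∫ z, H (z, u + z • a) ∂gaussianReal 0 1 ∂μ := by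
    intro H hH hint
    have hc : Continuous fun p : (Fin n → ℝ) × ℝ => H (p.2, p.1 + p.2 • a) := by fun_prop
    have hi : Integrable (fun p : (Fin n → ℝ) × ℝ => H (p.2, p.1 + p.2 • a))
        (μ.prod (gaussianReal 0 1)) := by
      rw [← hlaw, integrable_map_measure hc.aestronglyMeasurable hUZ.aemeasurable]
      simpa [Function.comp_def] using hint
    refine ⟨hi, ?_⟩
    rw [← integral_prod _ hi, ← hlaw, integral_map hUZ.aemeasurable hc.aestronglyMeasurable]
    simp
  have hle : ∀ p : ℝ × (Fin n → ℝ), C * (1 + ‖p.2‖) ^ m ≤ C * (1 + ‖p‖) ^ m := by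
    intro p
    have : ‖p.2‖ ≤ ‖p‖ := norm_snd_le p
    gcongr
  have i0 := integrable_comp_of_growth hZY (f := fun p => G p.2) (by fun_prop)
    (fun p => (h0 p.2).trans (hle p))
  have i1 := integrable_comp_of_growth hZY (f := fun p => p.1 * G p.2) (by fun_prop)
    (C := C) (m := m + 1) (fun p => by
      rw [norm_mul, pow_succ, ← mul_assoc, mul_comm]
      exact mul_le_mul ((h0 _).trans (hle p))
        ((norm_fst_le p).trans (by simp)) (norm_nonneg _) (by positivity))
  have i2 : ∀ v, Integrable (fun ω => fderiv ℝ G (Y ω) v) P := fun v =>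
    (integrable_comp_of_growth hY hDc h1).apply_continuousLinearMap v
  obtain ⟨k0, -⟩ := key (fun p => G p.2) (by fun_prop) i0
  obtain ⟨k1, e1⟩ := key (fun p => p.1 * G p.2) (by fun_prop) i1
  obtain ⟨k2, e2⟩ := key (fun p => fderiv ℝ G p.2 a) (by fun_prop) (i2 a)
  have hmain : ∫ ω, Z ω * G (Y ω) ∂P = ∫ ω, fderiv ℝ G (Y ω) a ∂P := by
    refine e1.trans (Eq.trans ?_ e2.symm)
    refine integral_congr_ae ?_
    filter_upwards [k0.prod_right_ae, k1.prod_right_ae, k2.prod_right_ae] with u u0 u1 u2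
    refine integral_id_mul_gaussianReal (fun z => ?_) u0 u1 u2
    have hd : HasDerivAt (fun z : ℝ => u + z • a) a z := by
      simpa using ((hasDerivAt_id z).smul_const a).const_add u
    exact ((hG.differentiable one_ne_zero).differentiableAt.hasFDerivAt).comp_hasDerivAt z hd
  rw [hmain]
  calc ∫ ω, fderiv ℝ G (Y ω) a ∂P
      = ∫ ω, ∑ j, a j * fderiv ℝ G (Y ω) (Pi.single j 1) ∂P := by
        refine integral_congr_ae (.of_forall fun ω => ?_)
        conv_lhs => rw [pi_eq_sum_univ' a]
        simp only [map_sum, map_smul, smul_eq_mul]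
    _ = _ := by
        rw [integral_finsetSum _ fun j _ => (i2 _).const_mul _]
        simp only [integral_const_mul, ha]

/-! ### Covariances of Gaussian vectors -/

lemma IsCenteredGaussianVector.hasGaussianLaw {Ω : Type*} [MeasurableSpace Ω] {P : Measure Ω}
    {n : ℕ} {X : Ω → Fin n → ℝ} {Λ : Fin n → Fin n → ℝ} (h : IsCenteredGaussianVector P X Λ) :
    HasGaussianLaw X P where
  isGaussian_map := by
    refine isGaussian_of_map_eq_gaussianReal fun L =>
      ⟨0, (∑ i, ∑ j, L (Pi.single i 1) * L (Pi.single j 1) * Λ i j).toNNReal, ?_⟩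
    rw [Measure.map_map (by fun_prop) h.1]
    convert! h.2 (fun i => L (Pi.single i 1)) using 2
    ext ω
    conv_lhs => rw [Function.comp_apply, pi_eq_sum_univ' (X ω)]
    simp only [map_sum, map_smul, smul_eq_mul, mul_comm]

lemma IsCenteredGaussianVector.variance_sum {Ω : Type*} [MeasurableSpace Ω] {P : Measure Ω}
    {n : ℕ} {X : Ω → Fin n → ℝ} {Λ : Fin n → Fin n → ℝ} (h : IsCenteredGaussianVector P X Λ)
    (c : Fin n → ℝ) :
    Var[fun ω => ∑ i, c i * X ω i; P] = max (∑ i, ∑ j, c i * c j * Λ i j) 0 := by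
  have hm : Measurable fun ω => ∑ i, c i * X ω i := by have := h.1; fun_prop
  have hv := variance_map (X := id) (μ := P) (by fun_prop) hm.aemeasurable
  rw [h.2 c, variance_id_gaussianReal, Real.coe_toNNReal'] at hv
  exact hv.symm

lemma IsCenteredGaussianVector.map_apply {Ω : Type*} [MeasurableSpace Ω] {P : Measure Ω}
    {n : ℕ} {X : Ω → Fin n → ℝ} {Λ : Fin n → Fin n → ℝ} (h : IsCenteredGaussianVector P X Λ)
    {i : Fin n} (hi : Λ i i = 1) : P.map (fun ω => X ω i) = gaussianReal 0 1 := by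
  have := h.2 (Pi.single i 1)
  simpa [Pi.single_apply, hi] using this

/-- The hypothesis only determines the variance of `c ⬝ X` as the positive part of the quadratic
form of `Λ`, and `Λ` need not be symmetric. With unit diagonal, the form is positive at
`e_i + t e_j` for small `t > 0`, which identifies the covariances as the symmetrization of `Λ`. -/
lemma IsCenteredGaussianVector.covariance_apply {Ω : Type*} [MeasurableSpace Ω] {P : Measure Ω}
    {n : ℕ} {X : Ω → Fin n → ℝ} {Λ : Fin n → Fin n → ℝ} (h : IsCenteredGaussianVector P X Λ)
    (hd : ∀ i, Λ i i = 1) (i j : Fin n) :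
    cov[fun ω => X ω i, fun ω => X ω j; P] = (Λ i j + Λ j i) / 2 := by
  have hX := h.hasGaussianLaw
  have := hX.isProbabilityMeasure
  have hL : ∀ k, MemLp (fun ω => X ω k) 2 P := fun k => (hX.eval k).memLp_two
  have hv1 : ∀ k, Var[fun ω => X ω k; P] = 1 := by
    intro k
    have := h.variance_sum (Pi.single k 1)
    simpa [Pi.single_apply, hd k] using this
  set q := (Λ i j + Λ j i) / 2 with hq
  have hpos : 0 < 1 + |q| := by positivity
  set t : ℝ := 1 / (2 * (1 + |q|)) with ht
  have ht0 : 0 < t := by positivity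
  have htq : t * (2 * (1 + |q|)) = 1 := by rw [ht]; field_simp
  have hV := h.variance_sum (Pi.single i 1 + Pi.single j t)
  have e1 : (fun ω => ∑ k, (Pi.single i 1 + Pi.single j t : Fin n → ℝ) k * X ω k)
      = (fun ω => X ω i) + t • fun ω => X ω j := by
    ext ω
    simp [add_mul, Finset.sum_add_distrib, Pi.single_apply]
  have e2 : (∑ k, ∑ l, (Pi.single i 1 + Pi.single j t : Fin n → ℝ) k *
      (Pi.single i 1 + Pi.single j t : Fin n → ℝ) l * Λ k l) = 1 + t * (2 * q) + t ^ 2 := by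
    have : ∀ k l, (Pi.single i 1 + Pi.single j t : Fin n → ℝ) k *
      (Pi.single i 1 + Pi.single j t : Fin n → ℝ) l * Λ k l =
      (Pi.single i 1 : Fin n → ℝ) k * ((Pi.single i 1 : Fin n → ℝ) l * Λ k l)
      + (Pi.single i 1 : Fin n → ℝ) k * ((Pi.single j t : Fin n → ℝ) l * Λ k l)
      + (Pi.single j t : Fin n → ℝ) k * ((Pi.single i 1 : Fin n → ℝ) l * Λ k l)
      + (Pi.single j t : Fin n → ℝ) k * ((Pi.single j t : Fin n → ℝ) l * Λ k l) := by
      intro k l; simp only [Pi.add_apply]; ring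
    simp only [this, Finset.sum_add_distrib, ← Finset.mul_sum]
    simp [Pi.single_apply, hd, hq]
    ring
  rw [e1, e2, variance_add (hL i) ((hL j).const_smul t), covariance_smul_right, variance_smul,
    hv1, hv1, max_eq_left (by nlinarith [neg_abs_le q])] at hV
  have : t * (cov[fun ω => X ω i, fun ω => X ω j; P] - q) = 0 := by linarith
  rcases mul_eq_zero.1 this with h | h <;> linarith

/-! ### Differentiating along the interpolation -/

/-- The interpolation `√h y₁ + √(1 - h) y₀` of a pair `(y₀, y₁)`. For `h` outside `[0, 1]` the real
square root vanishes at negative arguments, so this is continuous in `h ∈ ℝ`. -/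
noncomputable def interp {n : ℕ} (h : ℝ) (x : (Fin n → ℝ) × (Fin n → ℝ)) : Fin n → ℝ :=
  √h • x.2 + √(1 - h) • x.1

lemma growth_interp {n : ℕ} {F : Type*} [NormedAddCommGroup F] {H : (Fin n → ℝ) → F} {C : ℝ}
    {m : ℕ} (hC : ∀ x, ‖H x‖ ≤ C * (1 + ‖x‖) ^ m) {h K : ℝ} (h1 : √h ≤ K) (h2 : √(1 - h) ≤ K)
    (x : (Fin n → ℝ) × (Fin n → ℝ)) :
    ‖H (interp h x)‖ ≤ (C * (1 + 2 * K) ^ m) * (1 + ‖x‖) ^ m := by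
  have hCpos : 0 ≤ C := by simpa using (norm_nonneg _).trans (hC 0)
  have hK : 0 ≤ K := (Real.sqrt_nonneg _).trans h1
  have hx : ‖interp h x‖ ≤ 2 * K * ‖x‖ := by
    have e1 : √h * ‖x.2‖ ≤ K * ‖x‖ :=
      mul_le_mul h1 (norm_snd_le x) (norm_nonneg _) hK
    have e2 : √(1 - h) * ‖x.1‖ ≤ K * ‖x‖ :=
      mul_le_mul h2 (norm_fst_le x) (norm_nonneg _) hK
    refine (norm_add_le _ _).trans ?_
    rw [norm_smul, norm_smul, Real.norm_of_nonneg (Real.sqrt_nonneg _),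
      Real.norm_of_nonneg (Real.sqrt_nonneg _)]
    linarith
  refine (hC _).trans ?_
  rw [mul_assoc, ← mul_pow]
  have : 1 + ‖interp h x‖ ≤ (1 + 2 * K) * (1 + ‖x‖) := by nlinarith [norm_nonneg x]
  gcongr

lemma continuous_interp_left {n : ℕ} (x : (Fin n → ℝ) × (Fin n → ℝ)) :
    Continuous fun h => interp h x := by
  unfold interp; fun_prop

lemma continuous_interp_right {n : ℕ} (h : ℝ) :
    Continuous (interp h : (Fin n → ℝ) × (Fin n → ℝ) → Fin n → ℝ) := by
  unfold interp; fun_prop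

lemma continuous_integral_interp {Ω : Type*} [MeasurableSpace Ω] {P : Measure Ω} {n : ℕ}
    {X : Ω → (Fin n → ℝ) × (Fin n → ℝ)} (hX : HasGaussianLaw X P) {H : (Fin n → ℝ) → ℝ}
    (hH : Continuous H) {C : ℝ} {m : ℕ} (hC : ∀ x, ‖H x‖ ≤ C * (1 + ‖x‖) ^ m) :
    Continuous fun h => ∫ ω, H (interp h (X ω)) ∂P := by
  refine continuous_iff_continuousAt.2 fun h₀ => ?_
  have hdom : Integrable
      (fun ω => (C * (1 + 2 * √(|h₀| + 2)) ^ m) * (1 + ‖X ω‖) ^ m) P := by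
    refine integrable_comp_of_growth hX
      (f := fun x => (C * (1 + 2 * √(|h₀| + 2)) ^ m) * (1 + ‖x‖) ^ m) (by fun_prop)
      (C := C * (1 + 2 * √(|h₀| + 2)) ^ m) (m := m) (fun x => le_of_eq ?_)
    have hCpos : 0 ≤ C := by simpa using (norm_nonneg _).trans (hC 0)
    exact Real.norm_of_nonneg (by positivity)
  refine continuousAt_of_dominated (.of_forall fun h => ?_) ?_ hdom (.of_forall fun ω =>
    (hH.comp (continuous_interp_left _)).continuousAt)
  · exact (hH.comp (continuous_interp_right h)).comp_aestronglyMeasurable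
      hX.aemeasurable.aestronglyMeasurable
  · filter_upwards [Metric.ball_mem_nhds h₀ one_pos] with h hh
    rw [Metric.mem_ball, Real.dist_eq, abs_lt] at hh
    refine .of_forall fun ω => growth_interp hC (Real.sqrt_le_sqrt ?_) (Real.sqrt_le_sqrt ?_) _
    · linarith [le_abs_self h₀]
    · linarith [neg_abs_le h₀]

/-- Differentiation under the expectation in the interior of `[0, 1]`, before integrating by
parts. -/
lemma hasDerivAt_integral_interp {Ω : Type*} [MeasurableSpace Ω] {P : Measure Ω} {n : ℕ}
    {X : Ω → (Fin n → ℝ) × (Fin n → ℝ)} (hX : HasGaussianLaw X P) {F : (Fin n → ℝ) → ℝ}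
    (hF : ContDiff ℝ 1 F) {C : ℝ} {m : ℕ} (h0 : ∀ x, ‖F x‖ ≤ C * (1 + ‖x‖) ^ m)
    (h1 : ∀ x, ‖fderiv ℝ F x‖ ≤ C * (1 + ‖x‖) ^ m) {h : ℝ} (hh : h ∈ Set.Ioo (0 : ℝ) 1) :
    HasDerivAt (fun h => ∫ ω, F (interp h (X ω)) ∂P)
      (∫ ω, fderiv ℝ F (interp h (X ω))
        ((1 / (2 * √h)) • (X ω).2 - (1 / (2 * √(1 - h))) • (X ω).1) ∂P) h := by
  have hCpos : 0 ≤ C := by simpa using (norm_nonneg _).trans (h0 0)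
  have hDc : Continuous (fderiv ℝ F) := hF.continuous_fderiv one_ne_zero
  -- On `(ε, 1 - ε)` the derivatives of both square roots are bounded by `B`.
  obtain ⟨ε, hε, hε1, hε2⟩ : ∃ ε > 0, ε < h ∧ ε < 1 - h := by
    refine ⟨min h (1 - h) / 2, ?_, ?_, ?_⟩ <;>
    have := lt_min hh.1 (sub_pos.2 hh.2) <;>
    have := min_le_left h (1 - h) <;> have := min_le_right h (1 - h) <;> linarith
  set B : ℝ := 1 / (2 * √ε) with hB
  have hB0 : 0 ≤ B := by positivity
  have hsq : ∀ s, ε < s → 1 / (2 * √s) ≤ B := fun s hs => by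
    have := Real.sqrt_pos.2 hε
    have := Real.sqrt_le_sqrt hs.le
    rw [hB]; gcongr
  have hmeas : ∀ h : ℝ, AEStronglyMeasurable (fun ω => F (interp h (X ω))) P := fun h =>
    (hF.continuous.comp (continuous_interp_right h)).comp_aestronglyMeasurable
      hX.aemeasurable.aestronglyMeasurable
  have hdom : Integrable
      (fun ω => (C * (1 + 2 * 1) ^ m * (2 * B)) * (1 + ‖X ω‖) ^ (m + 1)) P :=
    integrable_comp_of_growth hX
      (f := fun x => (C * (1 + 2 * 1) ^ m * (2 * B)) * (1 + ‖x‖) ^ (m + 1)) (by fun_prop)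
      (fun x => le_of_eq (Real.norm_of_nonneg (by positivity)))
  have hsub : ∀ s ∈ Set.Ioo ε (1 - ε), ε < s ∧ ε < 1 - s ∧ s ≤ 1 ∧ 1 - s ≤ 1 := fun s hs =>
    ⟨hs.1, by linarith [hs.2], by linarith [hs.2], by linarith [hs.1]⟩
  refine (hasDerivAt_integral_of_dominated_loc_of_deriv_le (s := Set.Ioo ε (1 - ε))
    (F' := fun h ω => fderiv ℝ F (interp h (X ω))
        ((1 / (2 * √h)) • (X ω).2 - (1 / (2 * √(1 - h))) • (X ω).1))
    (Ioo_mem_nhds hε1 (by linarith)) (.of_forall hmeas) ?_ ?_ (.of_forall fun ω s hs => ?_) hdom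
    (.of_forall fun ω s hs => ?_)).2
  · exact integrable_comp_of_growth hX (hF.continuous.comp (continuous_interp_right h))
      (fun x => growth_interp h0 (Real.sqrt_le_one.2 hh.2.le)
        (Real.sqrt_le_one.2 (by linarith [hh.1])) x)
  · have : Continuous fun x : (Fin n → ℝ) × (Fin n → ℝ) => fderiv ℝ F (interp h x)
        ((1 / (2 * √h)) • x.2 - (1 / (2 * √(1 - h))) • x.1) :=
      (hDc.comp (continuous_interp_right h)).clm_apply (by fun_prop)
    exact this.comp_aestronglyMeasurable hX.aemeasurable.aestronglyMeasurable
  · obtain ⟨s1, s2, s3, s4⟩ := hsub s hs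
    have b1 := growth_interp h1 (Real.sqrt_le_one.2 s3) (Real.sqrt_le_one.2 s4) (X ω)
    have b2 : ‖(1 / (2 * √s)) • (X ω).2 - (1 / (2 * √(1 - s))) • (X ω).1‖
        ≤ 2 * B * (1 + ‖X ω‖) := by
      have e1 : 1 / (2 * √s) * ‖(X ω).2‖ ≤ B * ‖X ω‖ :=
        mul_le_mul (hsq _ s1) (norm_snd_le _) (norm_nonneg _) hB0
      have e2 : 1 / (2 * √(1 - s)) * ‖(X ω).1‖ ≤ B * ‖X ω‖ :=
        mul_le_mul (hsq _ s2) (norm_fst_le _) (norm_nonneg _) hB0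
      refine (norm_sub_le _ _).trans ?_
      rw [norm_smul, norm_smul, Real.norm_of_nonneg (by positivity),
        Real.norm_of_nonneg (by positivity)]
      linarith
    calc _ ≤ _ := ContinuousLinearMap.le_opNorm _ _
      _ ≤ _ := mul_le_mul b1 b2 (norm_nonneg _) (by positivity)
      _ = _ := by ring
  · obtain ⟨s1, s2, -, -⟩ := hsub s hs
    have d1 := (Real.hasDerivAt_sqrt (hε.trans s1).ne').smul_const (X ω).2
    have d2 := (((hasDerivAt_id s).const_sub 1).sqrt (hε.trans s2).ne').smul_const (X ω).1
    have d3 : HasDerivAt (fun h => interp h (X ω))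
        ((1 / (2 * √s)) • (X ω).2 - (1 / (2 * √(1 - s))) • (X ω).1) s := by
      convert! d1.add d2 using 1
      simp only [id_eq, neg_div, neg_smul, sub_eq_add_neg]
    exact ((hF.differentiable one_ne_zero).differentiableAt.hasFDerivAt).comp_hasDerivAt s d3

/-! ### The interpolation formula -/

/-- The derivative of `h ↦ E[F(Y(h))]` in the interior: integration by parts turns the factors
`Y₁ i / (2√h)` and `Y₀ i / (2√(1 - h))` into covariances, and the square roots cancel. Symmetry of
the Hessian replaces the symmetrized covariances by `Λ0`, `Λ1` themselves. -/
lemma hasDerivAt_gaussian_interp {Ω : Type*} [MeasurableSpace Ω] {P : Measure Ω} {n : ℕ}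
    {Y0 Y1 : Ω → Fin n → ℝ} {Λ0 Λ1 : Fin n → Fin n → ℝ}
    (hGauss0 : IsCenteredGaussianVector P Y0 Λ0) (hGauss1 : IsCenteredGaussianVector P Y1 Λ1)
    (hdiag0 : ∀ i, Λ0 i i = 1) (hdiag1 : ∀ i, Λ1 i i = 1) (hindep : IndepFun Y0 Y1 P)
    {F : (Fin n → ℝ) → ℝ} (hF : ContDiff ℝ 2 F) {C : ℝ} {m : ℕ}
    (b0 : ∀ x, ‖F x‖ ≤ C * (1 + ‖x‖) ^ m) (b1 : ∀ x, ‖fderiv ℝ F x‖ ≤ C * (1 + ‖x‖) ^ m)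
    (b2 : ∀ x, ‖fderiv ℝ (fderiv ℝ F) x‖ ≤ C * (1 + ‖x‖) ^ m)
    {h : ℝ} (hh : h ∈ Set.Ioo (0 : ℝ) 1) :
    HasDerivAt (fun h => ∫ ω, F (interp h (Y0 ω, Y1 ω)) ∂P)
      ((1 / 2) * ∑ i, ∑ j, (Λ1 i j - Λ0 i j) *
        ∫ ω, iteratedFDeriv ℝ 2 F (interp h (Y0 ω, Y1 ω)) ![Pi.single i 1, Pi.single j 1] ∂P)
      h := by
  have hCpos : 0 ≤ C := by simpa using (norm_nonneg _).trans (b0 0)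
  have g0 := hGauss0.hasGaussianLaw
  have g1 := hGauss1.hasGaussianLaw
  have hP := g0.isProbabilityMeasure
  have hX : HasGaussianLaw (fun ω => (Y0 ω, Y1 ω)) P := hindep.hasGaussianLaw g0 g1
  have hDF : ContDiff ℝ 1 (fderiv ℝ F) := hF.fderiv_right (by norm_num)
  have hDd : Differentiable ℝ (fderiv ℝ F) := hDF.differentiable one_ne_zero
  have hh0 : 0 < √h := Real.sqrt_pos.2 hh.1
  have hh1 : 0 < √(1 - h) := Real.sqrt_pos.2 (by linarith [hh.2])
  have le0 : √h ≤ 1 := Real.sqrt_le_one.2 hh.2.le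
  have le1 : √(1 - h) ≤ 1 := Real.sqrt_le_one.2 (by linarith [hh.1])
  -- The partial derivatives of `F` and their growth.
  set G : Fin n → (Fin n → ℝ) → ℝ := fun i x => fderiv ℝ F x (Pi.single i 1) with hGdef
  have hG : ∀ i, ContDiff ℝ 1 (G i) := fun i => hDF.clm_apply contDiff_const
  have hsingle : ∀ i : Fin n, ‖(Pi.single i 1 : Fin n → ℝ)‖ = 1 := fun i => by
    rw [Pi.norm_single, norm_one]
  have hG0 : ∀ i x, ‖G i x‖ ≤ C * (1 + ‖x‖) ^ m := fun i x => by
    refine (ContinuousLinearMap.le_opNorm _ _).trans ?_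
    rw [hsingle, mul_one]; exact b1 x
  have hGd : ∀ i x v, fderiv ℝ (G i) x v = fderiv ℝ (fderiv ℝ F) x v (Pi.single i 1) := by
    intro i x v
    have := ((hDd x).hasFDerivAt).clm_apply (hasFDerivAt_const (Pi.single i (1 : ℝ)) x)
    rw [this.fderiv]; simp
  have hG1 : ∀ i x, ‖fderiv ℝ (G i) x‖ ≤ C * (1 + ‖x‖) ^ m := fun i x => by
    refine ContinuousLinearMap.opNorm_le_bound _ (by positivity) fun v => ?_
    rw [hGd]
    refine (ContinuousLinearMap.le_opNorm₂ _ _ _).trans ?_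
    rw [hsingle, mul_one]
    exact mul_le_mul_of_nonneg_right (b2 x) (norm_nonneg _)
  set D : Fin n → Fin n → ℝ := fun i j => ∫ ω,
    iteratedFDeriv ℝ 2 F (interp h (Y0 ω, Y1 ω)) ![Pi.single i 1, Pi.single j 1] ∂P with hD
  have hDG : ∀ i j, ∫ ω, fderiv ℝ (G i) (interp h (Y0 ω, Y1 ω)) (Pi.single j 1) ∂P = D i j := by
    intro i j
    refine integral_congr_ae (.of_forall fun ω => ?_)
    simp only [hGd, iteratedFDeriv_two_apply]
    exact (hF.contDiffAt.isSymmSndFDerivAt (by simp)).eq _ _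
  have hDsymm : ∀ i j, D i j = D j i := by
    intro i j
    refine integral_congr_ae (.of_forall fun ω => ?_)
    simp only [iteratedFDeriv_two_apply]
    exact (hF.contDiffAt.isSymmSndFDerivAt (by simp)).eq _ _
  have m0 : ∀ j, MemLp (fun ω => Y0 ω j) 2 P := fun j => (g0.eval j).memLp_two
  have m1 : ∀ j, MemLp (fun ω => Y1 ω j) 2 P := fun j => (g1.eval j).memLp_two
  have hcross : ∀ i j, cov[fun ω => Y0 ω i, fun ω => Y1 ω j; P] = 0 := fun i j => by
    have hc : IndepFun (fun ω => Y0 ω i) (fun ω => Y1 ω j) P :=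
      hindep.comp (measurable_pi_apply i) (measurable_pi_apply j)
    exact hc.covariance_eq_zero (m0 i) (m1 j)
  have hYj : ∀ j, (fun ω => interp h (Y0 ω, Y1 ω) j)
      = √h • (fun ω => Y1 ω j) + √(1 - h) • fun ω => Y0 ω j := fun j => rfl
  have ibp1 : ∀ i, ∫ ω, Y1 ω i * G i (interp h (Y0 ω, Y1 ω)) ∂P
      = ∑ j, √h * ((Λ1 i j + Λ1 j i) / 2) * D i j := by
    intro i
    let L : ((Fin n → ℝ) × (Fin n → ℝ)) →L[ℝ] ℝ × (Fin n → ℝ) :=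
      (ContinuousLinearMap.proj i ∘L ContinuousLinearMap.snd ℝ _ _).prod
        (√h • ContinuousLinearMap.snd ℝ _ _ + √(1 - h) • ContinuousLinearMap.fst ℝ _ _)
    have hL : HasGaussianLaw (fun ω => (Y1 ω i, interp h (Y0 ω, Y1 ω))) P := hX.map_fun L
    rw [gaussian_integration_by_parts hL (hGauss1.map_apply (hdiag1 i)) (hG i) (hG0 i) (hG1 i)]
    refine Finset.sum_congr rfl fun j _ => ?_
    rw [hDG, hYj, covariance_add_right (m1 i) ((m1 j).const_smul _) ((m0 j).const_smul _),
      covariance_smul_right, covariance_smul_right, covariance_comm _ (fun ω => Y0 ω j), hcross,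
      hGauss1.covariance_apply hdiag1, mul_zero, add_zero]
  have ibp0 : ∀ i, ∫ ω, Y0 ω i * G i (interp h (Y0 ω, Y1 ω)) ∂P
      = ∑ j, √(1 - h) * ((Λ0 i j + Λ0 j i) / 2) * D i j := by
    intro i
    let L : ((Fin n → ℝ) × (Fin n → ℝ)) →L[ℝ] ℝ × (Fin n → ℝ) :=
      (ContinuousLinearMap.proj i ∘L ContinuousLinearMap.fst ℝ _ _).prod
        (√h • ContinuousLinearMap.snd ℝ _ _ + √(1 - h) • ContinuousLinearMap.fst ℝ _ _)
    have hL : HasGaussianLaw (fun ω => (Y0 ω i, interp h (Y0 ω, Y1 ω))) P := hX.map_fun L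
    rw [gaussian_integration_by_parts hL (hGauss0.map_apply (hdiag0 i)) (hG i) (hG0 i) (hG1 i)]
    refine Finset.sum_congr rfl fun j _ => ?_
    rw [hDG, hYj, covariance_add_right (m0 i) ((m1 j).const_smul _) ((m0 j).const_smul _),
      covariance_smul_right, covariance_smul_right, hcross,
      hGauss0.covariance_apply hdiag0, mul_zero, zero_add]
  -- Integrability of the products that occur once the differential is expanded in coordinates.
  have hint : ∀ (i : Fin n) (ℓ : ((Fin n → ℝ) × (Fin n → ℝ)) → ℝ), Continuous ℓ →
      (∀ x, ‖ℓ x‖ ≤ ‖x‖) →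
      Integrable (fun ω => ℓ (Y0 ω, Y1 ω) * G i (interp h (Y0 ω, Y1 ω))) P := by
    intro i ℓ hℓ hb
    refine integrable_comp_of_growth hX (f := fun x => ℓ x * G i (interp h x))
      (hℓ.mul ((hG i).continuous.comp (continuous_interp_right h)))
      (C := C * (1 + 2 * 1) ^ m) (m := m + 1) fun x => ?_
    rw [norm_mul, mul_comm, pow_succ, ← mul_assoc]
    exact mul_le_mul (growth_interp (hG0 i) le0 le1 x) ((hb x).trans (by simp)) (norm_nonneg _)
      (by positivity)
  have i1 : ∀ i, Integrable (fun ω => Y1 ω i * G i (interp h (Y0 ω, Y1 ω))) P := fun i =>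
    hint i (fun x => x.2 i) (by fun_prop) fun x => (norm_le_pi_norm x.2 i).trans (norm_snd_le x)
  have i0 : ∀ i, Integrable (fun ω => Y0 ω i * G i (interp h (Y0 ω, Y1 ω))) P := fun i =>
    hint i (fun x => x.1 i) (by fun_prop) fun x => (norm_le_pi_norm x.1 i).trans (norm_fst_le x)
  convert! hasDerivAt_integral_interp hX (hF.of_le (by norm_num)) b0 b1 hh using 1
  symm
  calc ∫ ω, fderiv ℝ F (interp h (Y0 ω, Y1 ω))
        ((1 / (2 * √h)) • Y1 ω - (1 / (2 * √(1 - h))) • Y0 ω) ∂P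
      = ∫ ω, ∑ i, ((1 / (2 * √h)) * (Y1 ω i * G i (interp h (Y0 ω, Y1 ω)))
          - (1 / (2 * √(1 - h))) * (Y0 ω i * G i (interp h (Y0 ω, Y1 ω)))) ∂P := by
        refine integral_congr_ae (.of_forall fun ω => ?_)
        simp only []
        conv_lhs => rw [pi_eq_sum_univ' ((1 / (2 * √h)) • Y1 ω - (1 / (2 * √(1 - h))) • Y0 ω)]
        simp only [map_sum, map_smul, smul_eq_mul, Pi.sub_apply, Pi.smul_apply, hGdef]
        exact Finset.sum_congr rfl fun i _ => by ring
    _ = ∑ i, ((1 / (2 * √h)) * ∑ j, √h * ((Λ1 i j + Λ1 j i) / 2) * D i j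
          - (1 / (2 * √(1 - h))) * ∑ j, √(1 - h) * ((Λ0 i j + Λ0 j i) / 2) * D i j) := by
        rw [integral_finsetSum]
        · refine Finset.sum_congr rfl fun i _ => ?_
          rw [integral_sub ((i1 i).const_mul _) ((i0 i).const_mul _), integral_const_mul,
            integral_const_mul, ibp1, ibp0]
        · exact fun i _ => ((i1 i).const_mul _).sub ((i0 i).const_mul _)
    _ = ∑ i, ∑ j, (1 / 4) * ((Λ1 i j - Λ0 i j) * D i j)
          + ∑ i, ∑ j, (1 / 4) * ((Λ1 j i - Λ0 j i) * D j i) := by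
        rw [← Finset.sum_add_distrib]
        refine Finset.sum_congr rfl fun i _ => ?_
        rw [Finset.mul_sum, Finset.mul_sum, ← Finset.sum_sub_distrib, ← Finset.sum_add_distrib]
        refine Finset.sum_congr rfl fun j _ => ?_
        rw [hDsymm j i]
        field_simp
        ring
    _ = (1 / 2) * ∑ i, ∑ j, (Λ1 i j - Λ0 i j) * D i j := by
        rw [Finset.sum_comm (f := fun i j => (1 / 4 : ℝ) * ((Λ1 j i - Λ0 j i) * D j i))]
        simp only [← Finset.mul_sum]
        ring


/-- Gaussian interpolation formula: if `Y(0)` and `Y(1)` are independent centered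
Gaussian vectors in `ℝⁿ` with unit-diagonal covariances `Λ(0)`, `Λ(1)`, and
`Y(h) = √h·Y(1) + √(1−h)·Y(0)`, then for any `C²` function `F` of moderate growth, the
map `h ↦ E[F(Y(h))]` is `C¹` on `[0,1]` and
`E[F(Y(1)) − F(Y(0))] = ½ ∑_{i,j} ∫₀¹ (Λ_ij(1) − Λ_ij(0)) E[∂²_{ij}F(Y(h))] dh`. -/
theorem stmt_4 {Ω : Type*} [MeasurableSpace Ω] (P : Measure Ω) [IsProbabilityMeasure P]
    (n : ℕ) (Y0 Y1 : Ω → Fin n → ℝ) (Λ0 Λ1 : Fin n → Fin n → ℝ)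
    (hGauss0 : IsCenteredGaussianVector P Y0 Λ0)
    (hGauss1 : IsCenteredGaussianVector P Y1 Λ1)
    (hdiag0 : ∀ i, Λ0 i i = 1) (hdiag1 : ∀ i, Λ1 i i = 1)
    (hindep : IndepFun Y0 Y1 P)
    (F : (Fin n → ℝ) → ℝ) (hF : ContDiff ℝ 2 F)
    (C : ℝ) (m : ℕ)
    (hgrowth : ∀ x : Fin n → ℝ,
      |F x| + ‖fderiv ℝ F x‖ + ‖fderiv ℝ (fderiv ℝ F) x‖ ≤ C * (1 + ‖x‖) ^ m) :
    ContDiffOn ℝ 1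
      (fun h : ℝ =>
        ∫ ω, F (fun i => Real.sqrt h * Y1 ω i + Real.sqrt (1 - h) * Y0 ω i) ∂P)
      (Set.Icc 0 1) ∧
    (∫ ω, F (Y1 ω) ∂P) - ∫ ω, F (Y0 ω) ∂P =
      (1 / 2) * ∑ i, ∑ j, ∫ h in (0 : ℝ)..1,
        (Λ1 i j - Λ0 i j) *
          ∫ ω, iteratedFDeriv ℝ 2 F
              (fun k => Real.sqrt h * Y1 ω k + Real.sqrt (1 - h) * Y0 ω k)
              ![Pi.single i 1, Pi.single j 1] ∂P := by
  have hsum : ∀ x, ‖F x‖ ≤ C * (1 + ‖x‖) ^ m ∧ ‖fderiv ℝ F x‖ ≤ C * (1 + ‖x‖) ^ m ∧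
      ‖fderiv ℝ (fderiv ℝ F) x‖ ≤ C * (1 + ‖x‖) ^ m := fun x => by
    have h1 := norm_nonneg (fderiv ℝ F x)
    have h2 := norm_nonneg (fderiv ℝ (fderiv ℝ F) x)
    have h3 := abs_nonneg (F x)
    have h4 := hgrowth x
    rw [Real.norm_eq_abs]
    exact ⟨by linarith, by linarith, by linarith⟩
  have b0 := fun x => (hsum x).1
  have b1 := fun x => (hsum x).2.1
  have b2 := fun x => (hsum x).2.2
  have hX : HasGaussianLaw (fun ω => (Y0 ω, Y1 ω)) P :=
    hindep.hasGaussianLaw hGauss0.hasGaussianLaw hGauss1.hasGaussianLaw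
  change ContDiffOn ℝ 1 (fun h : ℝ => ∫ ω, F (interp h (Y0 ω, Y1 ω)) ∂P) (Set.Icc 0 1) ∧
    (∫ ω, F (Y1 ω) ∂P) - ∫ ω, F (Y0 ω) ∂P = (1 / 2) * ∑ i, ∑ j, ∫ h in (0 : ℝ)..1,
      (Λ1 i j - Λ0 i j) * ∫ ω, iteratedFDeriv ℝ 2 F (interp h (Y0 ω, Y1 ω))
        ![Pi.single i 1, Pi.single j 1] ∂P
  set φ : ℝ → ℝ := fun h => ∫ ω, F (interp h (Y0 ω, Y1 ω)) ∂P with hφ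
  set D : Fin n → Fin n → ℝ → ℝ := fun i j h => ∫ ω,
    iteratedFDeriv ℝ 2 F (interp h (Y0 ω, Y1 ω)) ![Pi.single i 1, Pi.single j 1] ∂P with hD
  set ψ : ℝ → ℝ := fun h => (1 / 2) * ∑ i, ∑ j, (Λ1 i j - Λ0 i j) * D i j h with hψ
  have hφc : Continuous φ := continuous_integral_interp hX hF.continuous b0
  have hDc : ∀ i j, Continuous (D i j) := fun i j => by
    refine continuous_integral_interp hX
      (H := fun x => iteratedFDeriv ℝ 2 F x ![Pi.single i 1, Pi.single j 1]) ?_ (C := C) (m := m)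
      fun x => ?_
    · have := hF.continuous_iteratedFDeriv (m := 2) le_rfl
      fun_prop
    · rw [iteratedFDeriv_two_apply]
      refine (ContinuousLinearMap.le_opNorm₂ _ _ _).trans ?_
      simpa [Pi.norm_single] using b2 x
  have hψc : Continuous ψ := by fun_prop
  have hderiv : ∀ h ∈ Set.Ioo (0 : ℝ) 1, HasDerivAt φ (ψ h) h := fun h hh =>
    hasDerivAt_gaussian_interp hGauss0 hGauss1 hdiag0 hdiag1 hindep hF b0 b1 b2 hh
  have hftc : ∀ h ∈ Set.Icc (0 : ℝ) 1, φ h = φ 0 + ∫ s in (0 : ℝ)..h, ψ s := fun h hh => by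
    rw [intervalIntegral.integral_eq_sub_of_hasDerivAt_of_le hh.1 hφc.continuousOn
      (fun s hs => hderiv s ⟨hs.1, hs.2.trans_le hh.2⟩) (hψc.intervalIntegrable _ _)]
    ring
  refine ⟨?_, ?_⟩
  -- The primitive of `ψ` is `C¹` on all of `ℝ`, so no one-sided analysis at `0` and `1` is needed.
  · have hprim : ∀ h, HasDerivAt (fun h => φ 0 + ∫ s in (0 : ℝ)..h, ψ s) (ψ h) h := fun h =>
      (hψc.integral_hasStrictDerivAt 0 h).hasDerivAt.const_add _
    have hC1 : ContDiff ℝ 1 (fun h => φ 0 + ∫ s in (0 : ℝ)..h, ψ s) := by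
      refine contDiff_one_iff_deriv.2 ⟨fun h => (hprim h).differentiableAt, ?_⟩
      rw [funext fun h => (hprim h).deriv]
      exact hψc
    exact hC1.contDiffOn.congr hftc
  · have e1 : φ 1 = ∫ ω, F (Y1 ω) ∂P := by simp [hφ, interp]
    have e0 : φ 0 = ∫ ω, F (Y0 ω) ∂P := by simp [hφ, interp]
    have hi : ∀ i j, IntervalIntegrable (fun h => (Λ1 i j - Λ0 i j) * D i j h) volume 0 1 :=
      fun i j => ((hDc i j).const_mul _).intervalIntegrable _ _
    rw [← e1, ← e0, hftc 1 (by simp), add_sub_cancel_left, hψ,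
      intervalIntegral.integral_const_mul, intervalIntegral.integral_finsetSum fun i _ =>
        (continuous_finsetSum _ fun j _ => (hDc i j).const_mul _).intervalIntegrable _ _]
    congr 1
    exact Finset.sum_congr rfl fun i _ =>
      intervalIntegral.integral_finsetSum fun j _ => hi i j
end

section
/- (Gumbel limit for the maximum of the Gaussian free field on regular trees.) Let r ≥ 3 be an integer and for N ≥ 2 set a_N := √(2 log N) − (log log N + log(4π))/(2√(2 log N)) and b_N := 1/a_N. For each N, let T_N be a finite tree (connected acyclic simple graph) on N vertices in which every vertex has degree at most r, with graph distance d, and let Z^N = (Z_x)_{x ∈ V(T_N)} be a centered Gaussian vector with E[(Z_x)²] = 1 for every vertex x and E[Z_x Z_y] = (r−1)^{−d(x,y)} for all vertices x ≠ y. Then for every t ∈ ℝ, P( max_{x ∈ V(T_N)} Z_x ≤ a_N + t·b_N ) → exp(−e^{−t}) as N → ∞. -/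
/-!
The field on a tree is compared with `N` independent standard Gaussian variables.

Writing `ρ = (r - 1)⁻¹`, the covariance `ρ ^ dist` factors as `M * Mᵀ` with `M` entrywise nonnegative
(`tree_gram`): the field is generated from the root outwards, every vertex being `ρ` times its parent
plus independent noise. So the field is a nondecreasing function of independent variables and, by
the Harris–FKG inequality, it is associated (`assoc_tree`). For associated variables Lebowitz'
inequality (`Assoc.lebowitz`) bounds
`|P(max Z ≤ u) - P(ξ ≤ u) ^ N|` by the sum over ordered pairs `x ≠ y` of
`P(Z_x > u, Z_y > u) - P(ξ > u) ^ 2`, where `ξ` is a standard Gaussian variable.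

At the level `u = a_N + t / a_N`, pairs are split according to whether their distance exceeds a small
multiple `D` of `log N`.

* Near pairs: by the degree bound there are at most `N * (r + 1) ^ D ≤ N ^ (7 / 6)` of them
  (`card_ball_le`). As `ρ ≤ 1 / 2`, each contributes at most `exp (-(2 / 3) * u ^ 2)` (`pair_near`),
  which is about `N ^ (-4 / 3)`.
* Far pairs: their correlation is at most `2⁻ᴰ`, a negative power of `N`. Conditioning on one of the
  two variables (`pair_far`) reduces the contribution to `P(ξ > u) * (P(ξ > u') - P(ξ > u))` up to
  the negligible `P(ξ > 3 * u)`, where `u'` is a level of the form `a_N + t' / a_N` with `t' → t`.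

Mills' ratio gives `N * P(ξ > a_N + t' / a_N) → exp (-t)` whenever `t' → t` (`gtail_level_tendsto`).
Hence the sum over the far pairs vanishes, and `(1 - P(ξ > u)) ^ N → exp (-exp (-t))`.
-/

open Filter Real MeasureTheory ProbabilityTheory

/-- The standard Gaussian extreme-value centering sequence
`a_N = √(2 log N) − (log log N + log(4π))/(2√(2 log N))`. -/
noncomputable def aSeq (N : ℝ) : ℝ :=
  Real.sqrt (2 * Real.log N) -
    (Real.log (Real.log N) + Real.log (4 * Real.pi)) / (2 * Real.sqrt (2 * Real.log N))

/-! ### Association and the Lebowitz inequality -/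

/-- The probability law `μ` is (positively) associated: bounded measurable nondecreasing functions
are nonnegatively correlated under `μ`. For product laws this is the Harris–FKG inequality. -/
def Assoc {α : Type*} [MeasurableSpace α] [Preorder α] (μ : Measure α) : Prop :=
  ∀ f g : α → ℝ, Monotone f → Monotone g → Measurable f → Measurable g →
    (∃ C, ∀ x, |f x| ≤ C) → (∃ C, ∀ x, |g x| ≤ C) →
    (∫ x, f x ∂μ) * (∫ x, g x ∂μ) ≤ ∫ x, f x * g x ∂μ

lemma integrable_of_abs_bdd {α : Type*} [MeasurableSpace α] {μ : Measure α} [IsFiniteMeasure μ]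
    {f : α → ℝ} (hf : Measurable f) (hb : ∃ C, ∀ x, |f x| ≤ C) : Integrable f μ := by
  obtain ⟨C, hC⟩ := hb
  exact Integrable.of_bound hf.aestronglyMeasurable C (Eventually.of_forall hC)

lemma abs_bdd_mul {α : Type*} {f g : α → ℝ} (hf : ∃ C, ∀ x, |f x| ≤ C)
    (hg : ∃ C, ∀ x, |g x| ≤ C) : ∃ C, ∀ x, |f x * g x| ≤ C := by
  obtain ⟨C, hC⟩ := hf
  obtain ⟨D, hD⟩ := hg
  refine ⟨C * D, fun x => ?_⟩
  rw [abs_mul]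
  exact mul_le_mul (hC x) (hD x) (abs_nonneg _) ((abs_nonneg _).trans (hC x))

/-- Chebyshev's correlation inequality: on a linear order `(f x - f y) * (g x - g y)` is nonnegative,
and its integral against `μ ⊗ μ` is twice the covariance of `f` and `g`. -/
lemma Assoc.of_linearOrder {α : Type*} [MeasurableSpace α] [LinearOrder α] (μ : Measure α)
    [IsProbabilityMeasure μ] : Assoc μ := by
  intro f g hf hg mf mg bf bg
  have If : Integrable f μ := integrable_of_abs_bdd mf bf
  have Ig : Integrable g μ := integrable_of_abs_bdd mg bg
  have Ifg : Integrable (fun x => f x * g x) μ :=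
    integrable_of_abs_bdd (mf.mul mg) (abs_bdd_mul bf bg)
  have h0 : ∀ x y, 0 ≤ (f x - f y) * (g x - g y) := by
    intro x y
    rcases le_total x y with h | h
    · exact mul_nonneg_of_nonpos_of_nonpos (sub_nonpos.2 (hf h)) (sub_nonpos.2 (hg h))
    · exact mul_nonneg (sub_nonneg.2 (hf h)) (sub_nonneg.2 (hg h))
  have h1 : 0 ≤ ∫ x, ∫ y, (f x - f y) * (g x - g y) ∂μ ∂μ :=
    integral_nonneg fun x => integral_nonneg fun y => h0 x y
  have h2 : ∀ x, ∫ y, (f x - f y) * (g x - g y) ∂μ =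
      f x * g x - f x * (∫ y, g y ∂μ) - (∫ y, f y ∂μ) * g x + ∫ y, f y * g y ∂μ := by
    intro x
    have : ∀ y, (f x - f y) * (g x - g y) = f x * g x - f x * g y - f y * g x + f y * g y :=
      fun y => by ring
    simp_rw [this]
    rw [integral_add, integral_sub, integral_sub, integral_const_mul, integral_mul_const]
    · simp [integral_const_mul]
    · exact integrable_const _
    · exact Ig.const_mul _
    · exact (integrable_const _).sub (Ig.const_mul _)
    · exact If.mul_const _
    · exact ((integrable_const _).sub (Ig.const_mul _)).sub (If.mul_const _)
    · exact Ifg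
  simp_rw [h2] at h1
  rw [integral_add, integral_sub, integral_sub, integral_mul_const, integral_const_mul] at h1
  · simp at h1
    linarith
  · exact Ifg
  · exact If.mul_const _
  · exact Ifg.sub (If.mul_const _)
  · exact Ig.const_mul _
  · exact (Ifg.sub (If.mul_const _)).sub (Ig.const_mul _)
  · exact integrable_const _

lemma Assoc.map {α β : Type*} [MeasurableSpace α] [Preorder α] [MeasurableSpace β] [Preorder β]
    {μ : Measure α} (h : Assoc μ) {T : α → β} (hT : Monotone T) (mT : Measurable T) :
    Assoc (μ.map T) := by
  intro f g hf hg mf mg ⟨C, hC⟩ ⟨D, hD⟩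
  rw [integral_map mT.aemeasurable mf.aestronglyMeasurable,
    integral_map mT.aemeasurable mg.aestronglyMeasurable,
    integral_map mT.aemeasurable (f := fun x => f x * g x)
      (mf.mul mg).aestronglyMeasurable]
  exact h (f ∘ T) (g ∘ T) (hf.comp hT) (hg.comp hT) (mf.comp mT) (mg.comp mT)
    ⟨C, fun x => hC _⟩ ⟨D, fun x => hD _⟩

/-- Harris' induction step: the partial integrals of monotone functions are monotone, so the
correlation inequality for `ν` can be integrated and followed by the one for `μ`. -/
lemma Assoc.prod {α β : Type*} [MeasurableSpace α] [Preorder α] [MeasurableSpace β] [Preorder β]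
    {μ : Measure α} {ν : Measure β} [IsProbabilityMeasure μ] [IsProbabilityMeasure ν]
    (hμ : Assoc μ) (hν : Assoc ν) : Assoc (μ.prod ν) := by
  intro f g hf hg mf mg bf bg
  have If : Integrable f (μ.prod ν) := integrable_of_abs_bdd mf bf
  have Ig : Integrable g (μ.prod ν) := integrable_of_abs_bdd mg bg
  have Ifg : Integrable (fun x => f x * g x) (μ.prod ν) :=
    integrable_of_abs_bdd (mf.mul mg) (abs_bdd_mul bf bg)
  have sec : ∀ k : α × β → ℝ, Monotone k → Measurable k → (∃ C, ∀ x, |k x| ≤ C) →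
      Monotone (fun x => ∫ y, k (x, y) ∂ν) ∧ Measurable (fun x => ∫ y, k (x, y) ∂ν) ∧
      (∃ C, ∀ x, |∫ y, k (x, y) ∂ν| ≤ C) := by
    intro k hk mk ⟨C, hC⟩
    refine ⟨?_, ?_, C, ?_⟩
    · intro x x' hx
      refine integral_mono ?_ ?_ fun y => hk (Prod.mk_le_mk.2 ⟨hx, le_rfl⟩)
      · exact integrable_of_abs_bdd (mk.comp measurable_prodMk_left) ⟨C, fun y => hC _⟩
      · exact integrable_of_abs_bdd (mk.comp measurable_prodMk_left) ⟨C, fun y => hC _⟩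
    · exact (mk.stronglyMeasurable.integral_prod_right (f := fun x y => k (x, y))).measurable
    · intro x
      have := norm_integral_le_of_norm_le_const (μ := ν) (f := fun y => k (x, y)) (C := C)
        (Eventually.of_forall fun y => hC _)
      simpa using this
  obtain ⟨f1, f2, f3⟩ := sec f hf mf bf
  obtain ⟨g1, g2, g3⟩ := sec g hg mg bg
  rw [integral_prod _ If, integral_prod _ Ig, integral_prod _ Ifg]
  refine (hμ _ _ f1 g1 f2 g2 f3 g3).trans ?_
  refine integral_mono (integrable_of_abs_bdd (f2.mul g2) (abs_bdd_mul f3 g3))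
    Ifg.integral_prod_left fun x => ?_
  obtain ⟨C, hC⟩ := bf
  obtain ⟨D, hD⟩ := bg
  exact hν (fun y => f (x, y)) (fun y => g (x, y))
    (fun y y' h => hf (Prod.mk_le_mk.2 ⟨le_rfl, h⟩)) (fun y y' h => hg (Prod.mk_le_mk.2 ⟨le_rfl, h⟩))
    (mf.comp measurable_prodMk_left) (mg.comp measurable_prodMk_left)
    ⟨C, fun _ => hC _⟩ ⟨D, fun _ => hD _⟩

lemma Assoc.pi_fin (μ : Measure ℝ) [IsProbabilityMeasure μ] (n : ℕ) :
    Assoc (Measure.pi (fun _ : Fin n => μ)) := by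
  induction n with
  | zero =>
    intro f g _ _ _ _ _ _
    have hf : f = fun _ => f default := funext fun x => by rw [Subsingleton.elim x default]
    have hg : g = fun _ => g default := funext fun x => by rw [Subsingleton.elim x default]
    rw [hf, hg]
    simp
  | succ n ih =>
    have hmp := (measurePreserving_piFinSuccAbove (fun _ : Fin (n + 1) => μ) 0).symm
    rw [← hmp.map_eq]
    refine ((Assoc.of_linearOrder μ).prod ih).map ?_ (MeasurableEquiv.measurable _)
    intro x y hxy i
    refine Fin.cases ?_ (fun j => ?_) i
    · simpa [MeasurableEquiv.piFinSuccAbove] using hxy.1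
    · simpa [MeasurableEquiv.piFinSuccAbove] using hxy.2 j

/-- Lebowitz' inequality for decreasing indicators under an associated law: joint probabilities
differ from the product of the marginals by at most the sum of the pairwise covariances. Adding one
index `a` at a time, the covariance of `F a` with `∏ i ∈ S, F i` lies between `0` and the sum of the
covariances of `F a` with the `F i`, because both `∏ F i` and `∑ F i - ∏ F i` are antitone. -/
lemma Assoc.lebowitz {α ι : Type*} [MeasurableSpace α] [Preorder α] [DecidableEq ι]
    {μ : Measure α} [IsProbabilityMeasure μ] (h : Assoc μ) (F : ι → α → ℝ)
    (hF : ∀ i, Antitone (F i)) (mF : ∀ i, Measurable (F i)) (h01 : ∀ i x, F i x = 0 ∨ F i x = 1)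
    (S : Finset ι) :
    |∫ x, ∏ i ∈ S, F i x ∂μ - ∏ i ∈ S, ∫ x, F i x ∂μ| ≤
      ∑ i ∈ S, ∑ j ∈ S.erase i, (∫ x, F i x * F j x ∂μ - (∫ x, F i x ∂μ) * ∫ x, F j x ∂μ) := by
  have h0 : ∀ i x, 0 ≤ F i x := fun i x => by rcases h01 i x with h | h <;> simp [h]
  have h1 : ∀ i x, F i x ≤ 1 := fun i x => by rcases h01 i x with h | h <;> simp [h]
  have anti : ∀ f g : α → ℝ, Antitone f → Antitone g → Measurable f → Measurable g →
    (∃ C, ∀ x, |f x| ≤ C) → (∃ C, ∀ x, |g x| ≤ C) →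
    (∫ x, f x ∂μ) * (∫ x, g x ∂μ) ≤ ∫ x, f x * g x ∂μ := by
    intro f g hf hg mf mg ⟨C, hC⟩ ⟨D, hD⟩
    have := h (-f) (-g) hf.neg hg.neg mf.neg mg.neg ⟨C, fun x => by simpa using hC x⟩
      ⟨D, fun x => by simpa using hD x⟩
    simpa [integral_neg] using this
  have bF : ∀ i, ∃ C, ∀ x, |F i x| ≤ C := fun i =>
    ⟨1, fun x => abs_le.2 ⟨by linarith [h0 i x], h1 i x⟩⟩
  have IF : ∀ i, Integrable (F i) μ := fun i => integrable_of_abs_bdd (mF i) (bF i)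
  have cov0 : ∀ i j, 0 ≤ ∫ x, F i x * F j x ∂μ - (∫ x, F i x ∂μ) * ∫ x, F j x ∂μ := fun i j =>
    sub_nonneg.2 (anti _ _ (hF i) (hF j) (mF i) (mF j) (bF i) (bF j))
  have int0 : ∀ i, 0 ≤ ∫ x, F i x ∂μ := fun i => integral_nonneg (h0 i)
  have int1 : ∀ i, ∫ x, F i x ∂μ ≤ 1 := fun i => by
    have := integral_mono (IF i) (integrable_const (1 : ℝ)) (h1 i)
    simpa using this
  have p01 : ∀ (S : Finset ι) x, 0 ≤ ∏ i ∈ S, F i x ∧ ∏ i ∈ S, F i x ≤ 1 := fun S x =>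
    ⟨Finset.prod_nonneg fun i _ => h0 i x, Finset.prod_le_one (fun i _ => h0 i x) fun i _ => h1 i x⟩
  have pA : ∀ S : Finset ι, Antitone (fun x => ∏ i ∈ S, F i x) := fun S x y hxy =>
    Finset.prod_le_prod (fun i _ => h0 i y) fun i _ => hF i hxy
  have pM : ∀ S : Finset ι, Measurable (fun x => ∏ i ∈ S, F i x) := fun S =>
    Finset.measurable_prod S fun i _ => mF i
  have pB : ∀ S : Finset ι, ∃ C, ∀ x, |∏ i ∈ S, F i x| ≤ C := fun S =>
    ⟨1, fun x => abs_le.2 ⟨by linarith [(p01 S x).1], (p01 S x).2⟩⟩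
  -- `a + p - a * p` is monotone in both `a` and `p` on `[0, 1]`, which drives this induction.
  have sA : ∀ S : Finset ι, Antitone (fun x => ∑ i ∈ S, F i x - ∏ i ∈ S, F i x) := by
    intro S
    induction S using Finset.induction_on with
    | empty => intro x y _; simp
    | insert a S ha ih =>
      intro x y hxy
      have hi := ih hxy
      simp only [Finset.sum_insert ha, Finset.prod_insert ha] at hi ⊢
      have e1 := hF a hxy
      have e2 := pA S hxy
      have e3 := p01 S x
      have e4 := p01 S y
      simp only at e2
      rcases h01 a x with u | u <;> rcases h01 a y with v | v <;> rw [u, v] <;> rw [u, v] at e1 <;>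
        linarith
  have sM : ∀ S : Finset ι, Measurable (fun x => ∑ i ∈ S, F i x) := fun S =>
    Finset.measurable_sum S fun i _ => mF i
  have sB : ∀ S : Finset ι, ∃ C, ∀ x, |∑ i ∈ S, F i x| ≤ C := fun S =>
    ⟨S.card, fun x => (Finset.abs_sum_le_sum_abs _ _).trans <| by
      have := Finset.sum_le_card_nsmul S (fun i => |F i x|) 1
        (fun i _ => abs_le.2 ⟨by linarith [h0 i x], h1 i x⟩)
      simpa using this⟩
  induction S using Finset.induction_on with
  | empty => simp
  | insert a S ha ih =>
    set c : ι → ι → ℝ := fun i j =>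
      ∫ x, F i x * F j x ∂μ - (∫ x, F i x ∂μ) * ∫ x, F j x ∂μ with hc
    have Sint : Integrable (fun x => ∑ i ∈ S, F i x) μ := integrable_of_abs_bdd (sM S) (sB S)
    have Pint : Integrable (fun x => ∏ i ∈ S, F i x) μ := integrable_of_abs_bdd (pM S) (pB S)
    have k0 := anti _ _ (hF a) (pA S) (mF a) (pM S) (bF a) (pB S)
    have k1 := anti _ _ (hF a) (sA S) (mF a) ((sM S).sub (pM S)) (bF a) (by
      obtain ⟨C, hC⟩ := sB S
      obtain ⟨D, hD⟩ := pB S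
      exact ⟨C + D, fun x => (abs_sub _ _).trans (add_le_add (hC x) (hD x))⟩)
    have k2 : ∫ x, F a x * (∑ i ∈ S, F i x - ∏ i ∈ S, F i x) ∂μ =
        ∑ i ∈ S, ∫ x, F a x * F i x ∂μ - ∫ x, F a x * ∏ i ∈ S, F i x ∂μ := by
      simp_rw [mul_sub, Finset.mul_sum]
      rw [integral_sub, integral_finsetSum]
      · exact fun i _ => integrable_of_abs_bdd ((mF a).mul (mF i)) (abs_bdd_mul (bF a) (bF i))
      · exact integrable_finsetSum _ fun i _ =>
          integrable_of_abs_bdd ((mF a).mul (mF i)) (abs_bdd_mul (bF a) (bF i))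
      · exact integrable_of_abs_bdd ((mF a).mul (pM S)) (abs_bdd_mul (bF a) (pB S))
    rw [integral_sub Sint Pint, integral_finsetSum _ fun i _ => IF i, k2] at k1
    have k3 : ∑ i ∈ S, c a i = ∑ i ∈ S, ∫ x, F a x * F i x ∂μ
        - (∫ x, F a x ∂μ) * ∑ i ∈ S, ∫ x, F i x ∂μ := by
      rw [hc, Finset.mul_sum, ← Finset.sum_sub_distrib]
    have k4 : ∑ i ∈ insert a S, ∑ j ∈ (insert a S).erase i, c i j ≥
        ∑ i ∈ S, c a i + ∑ i ∈ S, ∑ j ∈ S.erase i, c i j := by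
      rw [Finset.sum_insert ha, Finset.erase_insert ha]
      refine add_le_add le_rfl (Finset.sum_le_sum fun i hi => ?_)
      refine Finset.sum_le_sum_of_subset_of_nonneg
        (Finset.erase_subset_erase _ (Finset.subset_insert _ _)) fun j _ _ => cov0 i j
    refine le_trans ?_ k4
    simp only [Finset.prod_insert ha]
    rw [abs_le] at ih ⊢
    have m0 := int0 a
    have m1 := int1 a
    have n0 : 0 ≤ ∑ i ∈ S, ∑ j ∈ S.erase i, c i j :=
      Finset.sum_nonneg fun i _ => Finset.sum_nonneg fun j _ => cov0 i j
    have n1 : 0 ≤ ∑ i ∈ S, c a i := Finset.sum_nonneg fun i _ => cov0 a i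
    set X := ∑ i ∈ S, ∑ j ∈ S.erase i, c i j
    set Y := ∑ i ∈ S, c a i
    set A := ∫ x, F a x ∂μ
    set B := ∫ x, ∏ i ∈ S, F i x ∂μ
    set C := ∏ i ∈ S, ∫ x, F i x ∂μ
    constructor
    · nlinarith [ih.1, mul_nonneg m0 n0, mul_nonneg (sub_nonneg.2 m1) n0]
    · nlinarith [ih.2, mul_nonneg m0 n0, mul_nonneg (sub_nonneg.2 m1) n0]

/-! ### Distances in trees and graphs of bounded degree -/

/-- Root the tree at `o`, let `p` be the parent of `v` and let `w ≠ v` be no farther from `o` than `v`.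
Then the geodesic from `w` to `v` passes through `p`: the walk `w → o → p` avoids `v`, so its
self-avoiding part followed by the edge `p v` is a path, and paths in a tree are geodesics. -/
lemma tree_dist_parent {V : Type*} {G : SimpleGraph V} (hG : G.IsTree) {o p v w : V}
    (hadj : G.Adj p v) (hp : G.dist p o < G.dist v o) (hw : G.dist w o ≤ G.dist v o)
    (hne : w ≠ v) : G.dist w v = G.dist w p + 1 := by
  classical
  obtain ⟨W, hW⟩ := hG.connected.exists_walk_length_eq_dist w o
  obtain ⟨R, hR⟩ := hG.connected.exists_walk_length_eq_dist p o
  have h1 : v ∉ W.support := by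
    intro hv
    have e1 := SimpleGraph.dist_le (W.dropUntil v hv)
    have e2 := congrArg SimpleGraph.Walk.length (W.take_spec hv)
    rw [SimpleGraph.Walk.length_append] at e2
    have e3 : (W.takeUntil v hv).length = 0 := by omega
    exact hne (SimpleGraph.Walk.eq_of_length_eq_zero e3)
  have h2 : v ∉ R.support := by
    intro hv
    have e1 := SimpleGraph.dist_le (R.dropUntil v hv)
    have e2 := congrArg SimpleGraph.Walk.length (R.take_spec hv)
    rw [SimpleGraph.Walk.length_append] at e2
    omega
  let Q := (W.append R.reverse).bypass
  have hQ : Q.IsPath := SimpleGraph.Walk.bypass_isPath _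
  have hv : v ∉ Q.support := by
    intro h
    have := SimpleGraph.Walk.support_bypass_subset_support _ h
    rw [SimpleGraph.Walk.mem_support_append_iff, SimpleGraph.Walk.support_reverse,
      List.mem_reverse] at this
    tauto
  have hQ2 := hQ.concat hv hadj
  have key : ∀ {a b : V} (q : G.Walk a b), q.IsPath → q.length = G.dist a b := by
    intro a b q hq
    obtain ⟨q', hq', hl⟩ := hG.connected.exists_path_of_dist a b
    rw [← hl, (hG.existsUnique_path a b).unique hq hq']
  rw [← key _ hQ2, ← key _ hQ, SimpleGraph.Walk.length_concat]

lemma tree_exists_parent {V : Type*} {G : SimpleGraph V} (hG : G.IsTree) {o v : V} (hv : v ≠ o) :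
    ∃ p, G.Adj p v ∧ G.dist p o + 1 = G.dist v o := by
  obtain ⟨W, hW⟩ := hG.connected.exists_walk_length_eq_dist v o
  cases W with
  | nil => exact absurd rfl hv
  | @cons _ p _ h q =>
    refine ⟨p, h.symm, ?_⟩
    have e1 := SimpleGraph.dist_le q
    rw [SimpleGraph.Walk.length_cons] at hW
    have e2 := hG.connected.dist_triangle (u := v) (v := p) (w := o)
    have e3 : G.dist v p = 1 := SimpleGraph.dist_eq_one_iff_adj.2 h
    omega

/-- The matrix `ρ ^ dist` of a tree has an entrywise nonnegative square root `M`, in the sense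
`M * Mᵀ = ρ ^ dist`. It encodes the tree-indexed autoregression: a vertex takes `ρ` times the value
of its parent plus `√(1 - ρ ^ 2)` times a fresh coordinate, one generation after another. -/
lemma tree_gram {V : Type*} [Fintype V] {G : SimpleGraph V} (hG : G.IsTree)
    {ρ : ℝ} (h0 : 0 ≤ ρ) (h1 : ρ ≤ 1) :
    ∃ M : V → V → ℝ, (∀ x k, 0 ≤ M x k) ∧ ∀ x y, ∑ k, M x k * M y k = ρ ^ G.dist x y := by
  classical
  obtain ⟨o⟩ := hG.connected.nonempty
  set σ := √(1 - ρ ^ 2) with hσ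
  have hσ2 : σ * σ = 1 - ρ ^ 2 := Real.mul_self_sqrt (by nlinarith)
  choose! p hp1 hp2 using fun v (hv : v ≠ o) => tree_exists_parent hG hv
  have main : ∀ n : ℕ, ∃ M : V → V → ℝ, (∀ x k, 0 ≤ M x k) ∧
      (∀ x k, G.dist x o ≤ n → n < G.dist k o → M x k = 0) ∧
      (∀ x y, G.dist x o ≤ n → G.dist y o ≤ n → ∑ k, M x k * M y k = ρ ^ G.dist x y) := by
    intro n
    induction n with
    | zero =>
      refine ⟨fun _ k => if k = o then 1 else 0, fun x k => by beta_reduce; split_ifs <;> simp, ?_, ?_⟩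
      · intro x k _ hk
        refine if_neg ?_
        rintro rfl
        simp at hk
      · intro x y hx hy
        have hx' : x = o := (hG.connected.dist_eq_zero_iff).1 (Nat.le_zero.1 hx)
        have hy' : y = o := (hG.connected.dist_eq_zero_iff).1 (Nat.le_zero.1 hy)
        subst hx'
        subst hy'
        simp
    | succ n ih =>
      obtain ⟨M, M0, Mz, Mg⟩ := ih
      refine ⟨fun x k => if G.dist x o ≤ n then M x k else
        ρ * (if G.dist k o ≤ n then M (p x) k else 0) + σ * (if k = x then 1 else 0), ?_, ?_, ?_⟩
      · intro x k
        have := Real.sqrt_nonneg (1 - ρ ^ 2)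
        beta_reduce
        split_ifs <;> first | exact M0 _ _ | (have := M0 (p x) k; positivity)
      · intro x k hx hk
        simp only
        split_ifs with h1 h2 h3 h4
        · exact Mz x k h1 (by omega)
        · subst h3; omega
        · omega
        · subst h4; omega
        · simp
      · have par : ∀ x, G.dist x o = n + 1 → G.Adj (p x) x ∧ G.dist (p x) o = n := by
          intro x hx
          have : x ≠ o := by rintro rfl; simp at hx
          exact ⟨hp1 x this, by have := hp2 x this; omega⟩
        -- the new row at `x` is the parent's row scaled by `ρ` plus a fresh coordinate
        have row : ∀ x, G.dist x o = n + 1 → ∀ k,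
            (if G.dist k o ≤ n then M (p x) k else 0) = M (p x) k := by
          intro x hx k
          split_ifs with h
          · rfl
          · exact (Mz _ _ (par x hx).2.le (by omega)).symm
        have old : ∀ x y, G.dist x o = n + 1 → G.dist y o ≤ n →
            ∑ k, (ρ * M (p x) k + σ * (if k = x then 1 else 0)) * M y k = ρ ^ G.dist x y := by
          intro x y hx hy
          have e1 : ∑ k, (ρ * M (p x) k + σ * (if k = x then 1 else 0)) * M y k =
              ρ * (∑ k, M (p x) k * M y k) + σ * M y x := by
            simp_rw [add_mul, Finset.sum_add_distrib, Finset.mul_sum, mul_assoc]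
            simp
          have hne : y ≠ x := by rintro rfl; omega
          rw [e1, Mz y x hy (by omega), Mg _ _ (par x hx).2.le hy, SimpleGraph.dist_comm (u := x),
            tree_dist_parent hG (o := o) (par x hx).1 (by rw [(par x hx).2]; omega) (by omega) hne,
            SimpleGraph.dist_comm (u := y), pow_succ]
          ring
        intro x y hx hy
        by_cases cx : G.dist x o ≤ n
        · by_cases cy : G.dist y o ≤ n
          · simp only [if_pos cx, if_pos cy]
            exact Mg x y cx cy
          · have hy' : G.dist y o = n + 1 := by omega
            simp only [if_pos cx, if_neg cy, row y hy']
            rw [SimpleGraph.dist_comm, ← old y x hy' cx]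
            exact Finset.sum_congr rfl fun k _ => mul_comm _ _
        · have hx' : G.dist x o = n + 1 := by omega
          by_cases cy : G.dist y o ≤ n
          · simp only [if_pos cy, if_neg cx, row x hx']
            exact old x y hx' cy
          · have hy' : G.dist y o = n + 1 := by omega
            simp only [if_neg cx, if_neg cy, row x hx', row y hy']
            have e1 : ∑ k, (ρ * M (p x) k + σ * (if k = x then 1 else 0)) *
                (ρ * M (p y) k + σ * (if k = y then 1 else 0)) =
                ρ * (∑ k, (ρ * M (p x) k + σ * (if k = x then 1 else 0)) * M (p y) k) +
                σ * (ρ * M (p x) y + σ * (if y = x then 1 else 0)) := by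
              simp_rw [mul_add (_ + _), Finset.sum_add_distrib, Finset.mul_sum]
              congr 1
              · exact Finset.sum_congr rfl fun k _ => by ring
              · simp [mul_comm]
            rw [e1, old x (p y) hx' (par y hy').2.le, Mz _ y (par x hx').2.le (by omega)]
            by_cases hxy : y = x
            · subst hxy
              have : G.dist y (p y) = 1 := SimpleGraph.dist_eq_one_iff_adj.2 (par y hy').1.symm
              rw [this]
              simp
              linear_combination hσ2
            · rw [if_neg hxy, tree_dist_parent hG (o := o) (par y hy').1
                (by rw [(par y hy').2]; omega) (by omega) (Ne.symm hxy), pow_succ]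
              ring
  obtain ⟨M, M0, -, Mg⟩ := main (∑ x, G.dist x o)
  have hle : ∀ x, G.dist x o ≤ ∑ x, G.dist x o := fun x =>
    Finset.single_le_sum (f := fun x => G.dist x o) (fun _ _ => Nat.zero_le _) (Finset.mem_univ x)
  exact ⟨M, M0, fun x y => Mg x y (hle x) (hle y)⟩

/-- Volume growth of balls in a graph of maximal degree at most `r`. -/
lemma card_ball_le {V : Type*} [Fintype V] [DecidableEq V] {G : SimpleGraph V}
    [DecidableRel G.Adj] (hG : G.Connected) {r : ℕ} (hr : ∀ v, G.degree v ≤ r) (x : V) (k : ℕ) :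
    (Finset.univ.filter fun y => G.dist x y ≤ k).card ≤ (r + 1) ^ k := by
  induction k with
  | zero =>
    have : (Finset.univ.filter fun y => G.dist x y ≤ 0) ⊆ {x} := by
      intro y hy
      simp only [Finset.mem_filter, Finset.mem_univ, true_and, Nat.le_zero] at hy
      rw [Finset.mem_singleton]
      exact ((hG.dist_eq_zero_iff).1 hy).symm
    simpa using Finset.card_le_card this
  | succ k ih =>
    have hsub : (Finset.univ.filter fun y => G.dist x y ≤ k + 1) ⊆
        (Finset.univ.filter fun y => G.dist x y ≤ k).biUnion
          fun z => insert z (G.neighborFinset z) := by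
      intro y hy
      simp only [Finset.mem_filter, Finset.mem_univ, true_and, Finset.mem_biUnion,
        Finset.mem_insert, SimpleGraph.mem_neighborFinset] at hy ⊢
      by_cases h : G.dist x y ≤ k
      · exact ⟨y, h, Or.inl rfl⟩
      · obtain ⟨W, hW⟩ := hG.exists_walk_length_eq_dist y x
        rw [SimpleGraph.dist_comm] at hy h
        cases W with
        | nil => simp at h
        | @cons _ z _ e q =>
          rw [SimpleGraph.Walk.length_cons] at hW
          have := SimpleGraph.dist_le q
          refine ⟨z, ?_, Or.inr e.symm⟩
          rw [SimpleGraph.dist_comm]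
          omega
    refine (Finset.card_le_card hsub).trans (Finset.card_biUnion_le.trans ?_)
    refine (Finset.sum_le_card_nsmul _ _ (r + 1) fun z _ => ?_).trans ?_
    · refine (Finset.card_insert_le _ _).trans ?_
      rw [SimpleGraph.card_neighborFinset_eq_degree]
      exact Nat.succ_le_succ (hr z)
    · rw [smul_eq_mul, pow_succ]
      exact Nat.mul_le_mul_right _ ih

/-! ### Laws of Gaussian vectors -/

lemma pi_gaussian_map_sum {n : ℕ} (b : Fin n → ℝ) :
    (Measure.pi (fun _ : Fin n => gaussianReal 0 1)).map (fun ξ => ∑ k, b k * ξ k) =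
      gaussianReal 0 (∑ k, b k * b k).toNNReal := by
  have hm : Measurable (fun ξ : Fin n → ℝ => ∑ k, b k * ξ k) := by fun_prop
  have : IsProbabilityMeasure
    ((Measure.pi (fun _ : Fin n => gaussianReal 0 1)).map (fun ξ => ∑ k, b k * ξ k)) :=
    Measure.isProbabilityMeasure_map hm.aemeasurable
  apply Measure.ext_of_charFun
  ext s
  rw [charFun_gaussianReal, charFun_apply_real, integral_map hm.aemeasurable (by fun_prop)]
  have e1 : ∀ ξ : Fin n → ℝ, Complex.exp (s * ((∑ k, b k * ξ k : ℝ) : ℂ) * Complex.I) =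
      ∏ k, Complex.exp (((s * b k : ℝ) : ℂ) * (ξ k : ℂ) * Complex.I) := by
    intro ξ
    rw [← Complex.exp_sum]
    congr 1
    push_cast
    rw [Finset.mul_sum, Finset.sum_mul]
    exact Finset.sum_congr rfl fun k _ => by ring
  simp_rw [e1]
  rw [integral_fintype_prod_eq_prod
    (f := fun k (x : ℝ) => Complex.exp (((s * b k : ℝ) : ℂ) * (x : ℂ) * Complex.I))]
  simp_rw [← charFun_apply_real, charFun_gaussianReal]
  rw [← Complex.exp_sum]
  congr 1
  have h0 : 0 ≤ ∑ k, b k * b k := Finset.sum_nonneg fun k _ => mul_self_nonneg _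
  have : ((∑ k, b k * b k).toNNReal : ℂ) = ((∑ k, b k * b k : ℝ) : ℂ) := by
    norm_cast
    exact Real.coe_toNNReal _ h0
  rw [this]
  push_cast
  simp only [mul_zero, zero_mul, zero_sub, Finset.sum_neg_distrib, Finset.sum_mul, Finset.sum_div]
  congr 1
  exact Finset.sum_congr rfl fun k _ => by ring

/-- A centered Gaussian vector with covariance `M * Mᵀ` has the law of `M ξ`, where `ξ` is a standard
Gaussian vector, since the two laws have the same one-dimensional projections. -/
lemma gaussian_law_eq {Ω ι : Type*} [MeasurableSpace Ω] [Fintype ι] {P : Measure Ω}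
    [IsProbabilityMeasure P] {X : Ω → ι → ℝ} {Λ : ι → ι → ℝ}
    (h : IsCenteredGaussianVector P X Λ) {n : ℕ} (M : ι → Fin n → ℝ)
    (hM : ∀ x y, ∑ k, M x k * M y k = Λ x y) :
    P.map X = (Measure.pi (fun _ : Fin n => gaussianReal 0 1)).map
      (fun ξ x => ∑ k, M x k * ξ k) := by
  classical
  have hm : Measurable (fun (ξ : Fin n → ℝ) (x : ι) => ∑ k, M x k * ξ k) := by fun_prop
  have : IsProbabilityMeasure (P.map X) := Measure.isProbabilityMeasure_map h.1.aemeasurable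
  have : IsProbabilityMeasure ((Measure.pi (fun _ : Fin n => gaussianReal 0 1)).map
      (fun ξ x => ∑ k, M x k * ξ k)) := Measure.isProbabilityMeasure_map hm.aemeasurable
  apply Measure.ext_of_charFunDual
  ext L
  rw [charFunDual_eq_charFun_map_one, charFunDual_eq_charFun_map_one]
  congr 1
  rw [Measure.map_map (by fun_prop) h.1, Measure.map_map (by fun_prop) hm]
  set c : ι → ℝ := fun i => L (Pi.single i 1) with hc
  have hL : ∀ z : ι → ℝ, L z = ∑ i, c i * z i := by
    intro z
    conv_lhs => rw [← Finset.univ_sum_single z, map_sum]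
    refine Finset.sum_congr rfl fun i _ => ?_
    have : Pi.single i (z i) = z i • (Pi.single i 1 : ι → ℝ) := by
      rw [← Pi.single_smul, smul_eq_mul, mul_one]
    rw [this, map_smul, smul_eq_mul, mul_comm]
  have e1 : (⇑L ∘ X) = fun ω => ∑ i, c i * X ω i := funext fun ω => hL _
  have e2 : (⇑L ∘ fun (ξ : Fin n → ℝ) x => ∑ k, M x k * ξ k) =
      fun ξ => ∑ k, (∑ i, c i * M i k) * ξ k := by
    funext ξ
    simp only [Function.comp, hL, Finset.mul_sum, Finset.sum_mul]
    rw [Finset.sum_comm]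
    exact Finset.sum_congr rfl fun k _ => Finset.sum_congr rfl fun i _ => by ring
  rw [e1, e2, h.2 c, pi_gaussian_map_sum]
  congr 2
  have e3 : ∀ k, (∑ i, c i * M i k) * (∑ i, c i * M i k) =
      ∑ i, ∑ j, c i * c j * (M i k * M j k) := fun k => by
    rw [Finset.sum_mul_sum]
    exact Finset.sum_congr rfl fun i _ => Finset.sum_congr rfl fun j _ => by ring
  simp_rw [e3, ← hM, Finset.mul_sum]
  rw [Finset.sum_comm (s := (Finset.univ : Finset (Fin n)))]
  exact Finset.sum_congr rfl fun i _ => Finset.sum_comm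

lemma IsCenteredGaussianVector.comp {Ω ι κ : Type*} [MeasurableSpace Ω] [Fintype ι] [Fintype κ]
    {P : Measure Ω} {X : Ω → ι → ℝ} {Λ : ι → ι → ℝ}
    (h : IsCenteredGaussianVector P X Λ) (f : κ → ι) :
    IsCenteredGaussianVector P (fun ω k => X ω (f k)) (fun k l => Λ (f k) (f l)) := by
  classical
  refine ⟨?_, fun c => ?_⟩
  · have := h.1
    fun_prop
  · have key : ∀ g : ι → ℝ, ∑ i, (∑ k, if f k = i then c k else 0) * g i = ∑ k, c k * g (f k) := by
      intro g
      simp_rw [Finset.sum_mul]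
      rw [Finset.sum_comm]
      refine Finset.sum_congr rfl fun k _ => ?_
      simp [ite_mul]
    have := h.2 (fun i => ∑ k, if f k = i then c k else 0)
    simp_rw [key] at this
    rw [this]
    congr 2
    simp_rw [mul_assoc, ← Finset.mul_sum, key]

/-! ### Gaussian tails at extreme-value levels -/

/-- The upper tail `P(ξ > x)` of a standard Gaussian variable `ξ`. -/
noncomputable def gtail (x : ℝ) : ℝ := (gaussianReal 0 1).real (Set.Ioi x)

lemma gtail_nonneg (x : ℝ) : 0 ≤ gtail x := measureReal_nonneg

lemma gtail_anti : Antitone gtail := fun _ _ h => measureReal_mono (Set.Ioi_subset_Ioi h)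

lemma gaussian_chernoff {v : NNReal} (hv : v ≠ 0) {x : ℝ} (hx : 0 ≤ x) :
    (gaussianReal 0 v).real (Set.Ioi x) ≤ Real.exp (-x ^ 2 / (2 * v)) := by
  have hv' : (0 : ℝ) < v := by positivity
  have h := measure_ge_le_exp_mul_mgf (μ := gaussianReal 0 v) (X := id) x (t := x / v)
    (by positivity) (by simpa using integrable_exp_mul_gaussianReal (μ := 0) (v := v) (x / v))
  rw [mgf_gaussianReal (by simp : (gaussianReal 0 v).map id = gaussianReal 0 v), ← Real.exp_add] at h
  refine (measureReal_mono (fun y hy => ?_)).trans (h.trans (Real.exp_le_exp.2 (le_of_eq ?_)))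
  · exact (le_of_lt hy : x ≤ y)
  · field_simp
    ring

lemma gtail_le_exp {x : ℝ} (hx : 0 ≤ x) : gtail x ≤ Real.exp (-x ^ 2 / 2) := by
  simpa [gtail] using gaussian_chernoff (v := 1) one_ne_zero hx

lemma gtail_eq_integral (x : ℝ) :
    gtail x = ∫ y in Set.Ioi x, (√(2 * π))⁻¹ * Real.exp (-y ^ 2 / 2) := by
  rw [gtail, Measure.real, gaussianReal_apply_eq_integral _ one_ne_zero,
    ENNReal.toReal_ofReal (integral_nonneg fun y => gaussianPDFReal_nonneg _ _ _)]
  simp [gaussianPDFReal]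

/-- Mills' ratio. The function `-φ(y) / y` has derivative `φ(y) * (1 + y⁻²)`, where `φ` is the standard
Gaussian density; integrate over `(x, ∞)` and bound `1 + y⁻²` between `1` and `1 + x⁻²`. -/
lemma gtail_mills {x : ℝ} (hx : 0 < x) :
    gtail x ≤ (√(2 * π))⁻¹ * Real.exp (-x ^ 2 / 2) / x ∧
    (√(2 * π))⁻¹ * Real.exp (-x ^ 2 / 2) / x ≤ (1 + (x ^ 2)⁻¹) * gtail x := by
  set K := (√(2 * π))⁻¹ with hK
  have hK0 : 0 ≤ K := by positivity
  have hder : ∀ y ∈ Set.Ici x, HasDerivAt (fun y => -(K * Real.exp (-y ^ 2 / 2) / y))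
      (K * Real.exp (-y ^ 2 / 2) * (1 + (y ^ 2)⁻¹)) y := by
    intro y hy
    have hy0 : y ≠ 0 := (hx.trans_le hy).ne'
    have h1 : HasDerivAt (fun y : ℝ => -y ^ 2 / 2) (-y) y := by
      have := ((hasDerivAt_pow 2 y).neg).div_const 2
      exact HasDerivAt.congr_deriv this (by simp; ring)
    have h2 := (((h1.exp).const_mul K).div (hasDerivAt_id y) hy0).neg
    refine HasDerivAt.congr_deriv h2 ?_
    simp only [id]
    field_simp
    ring
  have hnn : ∀ y ∈ Set.Ioi x, 0 ≤ K * Real.exp (-y ^ 2 / 2) * (1 + (y ^ 2)⁻¹) :=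
    fun y _ => by positivity
  have hlim : Tendsto (fun y => -(K * Real.exp (-y ^ 2 / 2) / y)) atTop (nhds 0) := by
    rw [← neg_zero]
    refine Tendsto.neg (squeeze_zero' (g := fun y => K * y⁻¹) ?_ ?_ ?_)
    · filter_upwards [eventually_gt_atTop 0] with y hy
      positivity
    · filter_upwards [eventually_gt_atTop 0] with y hy
      rw [div_eq_mul_inv]
      have : Real.exp (-y ^ 2 / 2) ≤ 1 := Real.exp_le_one_iff.2 (by nlinarith [sq_nonneg y])
      have h3 : K * Real.exp (-y ^ 2 / 2) ≤ K := mul_le_of_le_one_right hK0 this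
      exact mul_le_mul_of_nonneg_right h3 (by positivity)
    · simpa using tendsto_inv_atTop_zero.const_mul K
  have hIoi := integrableOn_Ioi_deriv_of_nonneg' hder hnn hlim
  have hval := integral_Ioi_of_hasDerivAt_of_nonneg' hder hnn hlim
  rw [zero_sub, neg_neg] at hval
  have hφ : IntegrableOn (fun y => K * Real.exp (-y ^ 2 / 2)) (Set.Ioi x) := by
    refine Integrable.mono' hIoi (by fun_prop) ?_
    refine (ae_restrict_iff' measurableSet_Ioi).2 (Eventually.of_forall fun y hy => ?_)
    rw [Real.norm_of_nonneg (by positivity)]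
    exact le_mul_of_one_le_right (by positivity) (by simp; positivity)
  rw [gtail_eq_integral, ← hval, ← integral_const_mul]
  constructor
  · refine setIntegral_mono_on hφ hIoi measurableSet_Ioi fun y hy => ?_
    exact le_mul_of_one_le_right (by positivity) (by simp; positivity)
  · refine setIntegral_mono_on hIoi (hφ.const_mul _) measurableSet_Ioi fun y hy => ?_
    rw [mul_comm]
    have hy' : x < y := hy
    gcongr

lemma log_sq_div_tendsto :
    Tendsto (fun s : ℝ => Real.log (2 * π * s ^ 2) / s) atTop (nhds 0) := by
  have h1 : Tendsto (fun s : ℝ => Real.log (2 * π) * s⁻¹ + 2 * (Real.log s / s)) atTop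
      (nhds (Real.log (2 * π) * 0 + 2 * 0)) := by
    refine (tendsto_inv_atTop_zero.const_mul _).add (Tendsto.const_mul _ ?_)
    simpa using Real.isLittleO_log_id_atTop.tendsto_div_nhds_zero
  simp only [mul_zero, add_zero] at h1
  refine h1.congr' ?_
  filter_upwards [eventually_gt_atTop 0] with s hs
  rw [Real.log_mul (x := 2 * π) (by positivity) (by positivity), Real.log_pow]
  push_cast
  field_simp

/-- The leading term `√(2 log N)` of the centering sequence `aSeq N`. -/
noncomputable def sSeq (N : ℕ) : ℝ := √(2 * Real.log N)

lemma sSeq_tendsto : Tendsto sSeq atTop atTop := by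
  refine Real.tendsto_sqrt_atTop.comp (Tendsto.const_mul_atTop two_pos ?_)
  exact Real.tendsto_log_atTop.comp tendsto_natCast_atTop_atTop

lemma sSeq_sq {N : ℕ} : sSeq N ^ 2 = 2 * Real.log N :=
  Real.sq_sqrt (mul_nonneg zero_le_two (Real.log_natCast_nonneg N))

/-- In terms of `s = √(2 log N)` the centering is `s - log (2 π s²) / (2 s)`, which is what makes
`exp (-a² / 2)` cancel both `N` and the factor `√(2 π) * s` of Mills' ratio. -/
lemma aSeq_eq {N : ℕ} (hN : 2 ≤ N) :
    aSeq N = sSeq N - Real.log (2 * π * sSeq N ^ 2) / (2 * sSeq N) := by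
  have hl : 0 < Real.log N := Real.log_pos (by exact_mod_cast hN)
  rw [sSeq_sq, aSeq, ← Real.log_mul hl.ne' (by positivity), sSeq]
  congr 3
  ring

lemma aSeq_div_tendsto : Tendsto (fun N : ℕ => aSeq N / sSeq N) atTop (nhds 1) := by
  have h := (log_sq_div_tendsto.comp sSeq_tendsto).mul
    ((tendsto_inv_atTop_zero.comp sSeq_tendsto).const_mul 2⁻¹)
  have h2 := h.const_sub 1
  simp only [mul_zero, sub_zero] at h2
  refine h2.congr' ?_
  filter_upwards [eventually_ge_atTop 2, sSeq_tendsto.eventually_gt_atTop 0] with N hN hs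
  rw [aSeq_eq hN]
  simp only [Function.comp]
  field_simp

lemma aSeq_tendsto : Tendsto (fun N : ℕ => aSeq N) atTop atTop := by
  refine (aSeq_div_tendsto.pos_mul_atTop one_pos sSeq_tendsto).congr' ?_
  filter_upwards [sSeq_tendsto.eventually_gt_atTop 0] with N hs
  field_simp

lemma level_div_tendsto {t : ℝ} {τ : ℕ → ℝ} (hτ : Tendsto τ atTop (nhds t)) :
    Tendsto (fun N : ℕ => (aSeq N + τ N * (aSeq N)⁻¹) / sSeq N) atTop (nhds 1) := by
  have h := aSeq_div_tendsto.add ((hτ.mul (tendsto_inv_atTop_zero.comp aSeq_tendsto)).mul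
    (tendsto_inv_atTop_zero.comp sSeq_tendsto))
  simp only [mul_zero, add_zero] at h
  refine h.congr fun N => ?_
  simp only [Function.comp]
  ring

lemma level_tendsto {t : ℝ} {τ : ℕ → ℝ} (hτ : Tendsto τ atTop (nhds t)) :
    Tendsto (fun N : ℕ => aSeq N + τ N * (aSeq N)⁻¹) atTop atTop := by
  refine ((level_div_tendsto hτ).pos_mul_atTop one_pos sSeq_tendsto).congr' ?_
  filter_upwards [sSeq_tendsto.eventually_gt_atTop 0] with N hs
  field_simp

/-- Expected number of exceedances with the tail replaced by its Mills approximation. With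
`s = √(2 log N)` and `c = log (2 π s²)`, the exponent `log N - u² / 2` at `u = a + τ / a` equals
`c / 2 - (c / s)² / 8 - τ - (τ / a)² / 2`, where `exp (c / 2) = √(2 π) * s`. -/
lemma density_tendsto {t : ℝ} {τ : ℕ → ℝ} (hτ : Tendsto τ atTop (nhds t)) :
    Tendsto (fun N : ℕ => N * ((√(2 * π))⁻¹ *
      Real.exp (-(aSeq N + τ N * (aSeq N)⁻¹) ^ 2 / 2) / (aSeq N + τ N * (aSeq N)⁻¹)))
      atTop (nhds (Real.exp (-t))) := by
  have hc := log_sq_div_tendsto.comp sSeq_tendsto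
  have ha := tendsto_inv_atTop_zero.comp aSeq_tendsto
  have hexp : Tendsto (fun N : ℕ => Real.exp (-(Real.log (2 * π * sSeq N ^ 2) / sSeq N) ^ 2 / 8
      - τ N - (τ N * (aSeq N)⁻¹) ^ 2 / 2)) atTop (nhds (Real.exp (-(0 ^ 2) / 8 - t - (t * 0) ^ 2 / 2))) := by
    refine (Real.continuous_exp.tendsto _).comp ?_
    exact ((((hc.pow 2).neg).div_const 8).sub hτ).sub (((hτ.mul ha).pow 2).div_const 2)
  have h := (level_div_tendsto hτ).inv₀ one_ne_zero |>.mul hexp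
  have h0 : (1 : ℝ)⁻¹ * Real.exp (-(0 ^ 2) / 8 - t - (t * 0) ^ 2 / 2) = Real.exp (-t) := by
    simp
  rw [h0] at h
  refine h.congr' ?_
  filter_upwards [eventually_ge_atTop 2, sSeq_tendsto.eventually_gt_atTop 0,
    aSeq_tendsto.eventually_gt_atTop 0, (level_tendsto hτ).eventually_gt_atTop 0] with N hN hs ha hu
  have hNpos : (0 : ℝ) < N := by exact_mod_cast (by omega : 0 < N)
  have eN : (N : ℝ) = Real.exp (sSeq N ^ 2 / 2) := by
    rw [sSeq_sq, mul_div_cancel_left₀ _ two_ne_zero, Real.exp_log hNpos]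
  have ec : sSeq N = (√(2 * π))⁻¹ * Real.exp (Real.log (2 * π * sSeq N ^ 2) / 2) := by
    rw [← Real.log_sqrt (by positivity), Real.exp_log (by positivity),
      Real.sqrt_mul (x := 2 * π) (by positivity), Real.sqrt_sq hs.le]
    field_simp
  have eq2 : sSeq N ^ 2 / 2 + -(aSeq N + τ N * (aSeq N)⁻¹) ^ 2 / 2 =
      Real.log (2 * π * sSeq N ^ 2) / 2 + (-(Real.log (2 * π * sSeq N ^ 2) / sSeq N) ^ 2 / 8
      - τ N - (τ N * (aSeq N)⁻¹) ^ 2 / 2) := by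
    have e1 : (aSeq N + τ N * (aSeq N)⁻¹) ^ 2 =
        aSeq N ^ 2 + 2 * τ N + (τ N * (aSeq N)⁻¹) ^ 2 := by
      field_simp
      ring
    rw [e1, aSeq_eq hN]
    field_simp
    ring
  rw [inv_div]
  set u := aSeq N + τ N * (aSeq N)⁻¹
  set E := -(Real.log (2 * π * sSeq N ^ 2) / sSeq N) ^ 2 / 8 - τ N - (τ N * (aSeq N)⁻¹) ^ 2 / 2
  calc sSeq N / u * Real.exp E
      = ((√(2 * π))⁻¹ * Real.exp (Real.log (2 * π * sSeq N ^ 2) / 2)) * Real.exp E / u := by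
        rw [← ec]; ring
    _ = (√(2 * π))⁻¹ * Real.exp (Real.log (2 * π * sSeq N ^ 2) / 2 + E) / u := by
        rw [Real.exp_add]; ring
    _ = (√(2 * π))⁻¹ * (N * Real.exp (-u ^ 2 / 2)) / u := by
        rw [← eq2, Real.exp_add, ← eN]
    _ = _ := by ring

/-- The expected number of exceedances of the level `a_N + τ_N / a_N` by `N` standard Gaussian
variables converges to `exp (-t)` as soon as `τ_N → t`. -/
lemma gtail_level_tendsto {t : ℝ} {τ : ℕ → ℝ} (hτ : Tendsto τ atTop (nhds t)) :
    Tendsto (fun N : ℕ => N * gtail (aSeq N + τ N * (aSeq N)⁻¹)) atTop (nhds (Real.exp (-t))) := by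
  have h := density_tendsto hτ
  have hu := level_tendsto hτ
  have hcor : Tendsto (fun N : ℕ => (1 + ((aSeq N + τ N * (aSeq N)⁻¹) ^ 2)⁻¹)⁻¹) atTop
      (nhds (1 + 0)⁻¹) := by
    refine Tendsto.inv₀ (Tendsto.const_add _ ?_) (by norm_num)
    exact tendsto_inv_atTop_zero.comp ((tendsto_pow_atTop two_ne_zero).comp hu)
  have hlow := hcor.mul h
  rw [add_zero, inv_one, one_mul] at hlow
  refine tendsto_of_tendsto_of_tendsto_of_le_of_le' hlow h ?_ ?_
  · filter_upwards [hu.eventually_gt_atTop 0] with N hN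
    have := (gtail_mills hN).2
    rw [inv_mul_le_iff₀ (by positivity)]
    calc _ ≤ (N : ℝ) * _ := mul_le_mul_of_nonneg_left this (Nat.cast_nonneg N)
      _ = _ := by ring
  · filter_upwards [hu.eventually_gt_atTop 0] with N hN
    exact mul_le_mul_of_nonneg_left (gtail_mills hN).1 (Nat.cast_nonneg N)

/-! ### Pairs of exceedances and comparison with independence -/

lemma marginal_tail {Ω ι : Type*} [MeasurableSpace Ω] [Fintype ι] {P : Measure Ω}
    {X : Ω → ι → ℝ} {Λ : ι → ι → ℝ} (h : IsCenteredGaussianVector P X Λ) {x : ι}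
    (hx : Λ x x = 1) (u : ℝ) : P.real {ω | u < X ω x} = gtail u := by
  have hl := (h.comp (fun _ : Fin 1 => x)).2 (fun _ => 1)
  simp only [Fin.sum_univ_one, one_mul, hx, Real.toNNReal_one] at hl
  have hm : Measurable (fun ω => X ω x) := (measurable_pi_apply x).comp h.1
  rw [gtail, ← hl, map_measureReal_apply hm measurableSet_Ioi]
  rfl

/-- Joint exceedance for a pair with correlation `s ≤ 1 / 2`: then `X x + X y` exceeds `2 * u` and has
variance `2 + 2 * s ≤ 3`, so the Chernoff bound gives `exp (-(2 * u) ^ 2 / 6)`. -/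
lemma pair_near {Ω ι : Type*} [MeasurableSpace Ω] [Fintype ι] {P : Measure Ω}
    [IsProbabilityMeasure P]
    {X : Ω → ι → ℝ} {Λ : ι → ι → ℝ} (h : IsCenteredGaussianVector P X Λ) {x y : ι} {s : ℝ}
    (hx : Λ x x = 1) (hy : Λ y y = 1) (hxy : Λ x y = s) (hyx : Λ y x = s) (h0 : 0 ≤ s)
    (h1 : s ≤ 1 / 2) {u : ℝ} (hu : 0 ≤ u) :
    P.real {ω | u < X ω x ∧ u < X ω y} ≤ Real.exp (-(2 / 3) * u ^ 2) := by
  have hl := (h.comp ![x, y]).2 (fun _ => 1)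
  simp only [Fin.sum_univ_two, one_mul, Matrix.cons_val_zero, Matrix.cons_val_one, hx, hy, hxy,
    hyx] at hl
  have hm : Measurable (fun ω => X ω x + X ω y) :=
    ((measurable_pi_apply x).comp h.1).add ((measurable_pi_apply y).comp h.1)
  have hv : (0 : ℝ) < 1 + s + (s + 1) := by linarith
  have hc := gaussian_chernoff (v := (1 + s + (s + 1)).toNNReal) (by simpa using hv)
    (x := 2 * u) (by linarith)
  rw [← hl, map_measureReal_apply hm measurableSet_Ioi, Real.coe_toNNReal _ hv.le] at hc
  refine (measureReal_mono ?_).trans (hc.trans (Real.exp_le_exp.2 ?_))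
  · intro ω hω
    show 2 * u < X ω x + X ω y
    linarith [hω.1, hω.2]
  · rw [div_le_iff₀ (by linarith)]
    nlinarith [sq_nonneg u, mul_nonneg (sub_nonneg.2 h1) (sq_nonneg u)]

lemma pi_two_real (a b : Set ℝ) :
    (Measure.pi (fun _ : Fin 2 => gaussianReal 0 1)).real {ξ | ξ 0 ∈ a ∧ ξ 1 ∈ b} =
      (gaussianReal 0 1).real a * (gaussianReal 0 1).real b := by
  have : {ξ : Fin 2 → ℝ | ξ 0 ∈ a ∧ ξ 1 ∈ b} = Set.univ.pi ![a, b] := by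
    ext ξ
    simp [Set.mem_pi, Fin.forall_fin_two]
  rw [this, Measure.real, Measure.pi_pi]
  simp [Fin.prod_univ_two, Measure.real]

/-- Joint exceedance for a weakly correlated pair. Write `X y = s * X x + √(1 - s ^ 2) * η` with `η`
independent of `X x`: unless `X x > 3 * u`, the variable `η` must exceed `u - 3 * s₀ * u`. -/
lemma pair_far {Ω ι : Type*} [MeasurableSpace Ω] [Fintype ι] {P : Measure Ω}
    [IsProbabilityMeasure P]
    {X : Ω → ι → ℝ} {Λ : ι → ι → ℝ} (h : IsCenteredGaussianVector P X Λ) {x y : ι} {s s₀ : ℝ}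
    (hx : Λ x x = 1) (hy : Λ y y = 1) (hxy : Λ x y = s) (hyx : Λ y x = s) (h0 : 0 ≤ s)
    (h1 : s ≤ s₀) (hs₀ : s₀ ≤ 1 / 3) {u : ℝ} (hu : 0 ≤ u) :
    P.real {ω | u < X ω x ∧ u < X ω y} ≤ gtail (3 * u) + gtail u * gtail (u - 3 * s₀ * u) := by
  set σ := √(1 - s ^ 2) with hσ
  have hs1 : s ≤ 1 / 3 := h1.trans hs₀
  have hσ2 : σ * σ = 1 - s ^ 2 := Real.mul_self_sqrt (by nlinarith)
  have hσ0 : 0 ≤ σ := Real.sqrt_nonneg _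
  have hσ1 : σ ≤ 1 := Real.sqrt_le_one.2 (by nlinarith)
  have hl := gaussian_law_eq (h.comp ![x, y]) (n := 2) ![![1, 0], ![s, σ]] (by
    intro i j
    fin_cases i <;> fin_cases j <;> simp [Fin.sum_univ_two, hx, hy, hxy, hyx]
    rw [hσ2]; ring)
  have hm : Measurable (fun ω k => X ω (![x, y] k)) := (h.comp ![x, y]).1
  have hms : MeasurableSet {z : Fin 2 → ℝ | u < z 0 ∧ u < z 1} :=
    (measurableSet_lt measurable_const (measurable_pi_apply 0)).inter
      (measurableSet_lt measurable_const (measurable_pi_apply 1))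
  have e1 : P.real {ω | u < X ω x ∧ u < X ω y} =
      (P.map (fun ω k => X ω (![x, y] k))).real {z | u < z 0 ∧ u < z 1} := by
    rw [map_measureReal_apply hm hms]
    rfl
  rw [e1, hl, map_measureReal_apply (by fun_prop) hms]
  have e2 : gtail (3 * u) = (Measure.pi (fun _ : Fin 2 => gaussianReal 0 1)).real
      {ξ | ξ 0 ∈ Set.Ioi (3 * u) ∧ ξ 1 ∈ Set.univ} := by
    rw [pi_two_real, gtail]
    simp
  have e3 : gtail u * gtail (u - 3 * s₀ * u) =
      (Measure.pi (fun _ : Fin 2 => gaussianReal 0 1)).real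
      {ξ | ξ 0 ∈ Set.Ioi u ∧ ξ 1 ∈ Set.Ioi (u - 3 * s₀ * u)} := by
    rw [pi_two_real, gtail, gtail]
  rw [e2, e3]
  refine (measureReal_mono ?_).trans (measureReal_union_le _ _)
  intro ξ hξ
  simp only [Set.mem_preimage, Set.mem_ofPred_eq, Fin.sum_univ_two, Matrix.cons_val_zero,
    Matrix.cons_val_one, one_mul, zero_mul, add_zero] at hξ
  simp only [Set.mem_union, Set.mem_ofPred_eq, Set.mem_Ioi, Set.mem_univ, and_true]
  by_cases hb : 3 * u < ξ 0
  · exact Or.inl hb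
  · right
    refine ⟨hξ.1, ?_⟩
    have k1 : s * ξ 0 ≤ s₀ * (3 * u) :=
      mul_le_mul h1 (not_lt.1 hb) (hu.trans hξ.1.le) (h0.trans h1)
    have k2 : 0 ≤ u - 3 * s₀ * u := by nlinarith
    have k3 : u - 3 * s₀ * u < σ * ξ 1 := by linarith [hξ.2]
    have k4 : 0 < ξ 1 := by
      by_contra hneg
      nlinarith [mul_nonneg hσ0 (neg_nonneg.2 (not_lt.1 hneg))]
    nlinarith

/-- The field is a monotone image, through the nonnegative matrix of `tree_gram`, of independent
Gaussian variables, hence associated. -/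
lemma assoc_tree {V Ω : Type*} [Fintype V] [MeasurableSpace Ω] {P : Measure Ω}
    [IsProbabilityMeasure P] {G : SimpleGraph V} (hG : G.IsTree) {ρ : ℝ} (h0 : 0 ≤ ρ) (h1 : ρ ≤ 1)
    {Z : Ω → V → ℝ} (hZ : IsCenteredGaussianVector P Z (fun x y => ρ ^ G.dist x y)) :
    Assoc (P.map Z) := by
  obtain ⟨M, M0, hM⟩ := tree_gram hG h0 h1
  let e := Fintype.equivFin V
  have hl := gaussian_law_eq hZ (fun x k => M x (e.symm k)) (fun x y => by
    rw [← hM x y]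
    exact e.symm.sum_comp (fun k => M x k * M y k))
  rw [hl]
  refine (Assoc.pi_fin _ _).map ?_ (by fun_prop)
  intro ξ ξ' hξ x
  exact Finset.sum_le_sum fun k _ => mul_le_mul_of_nonneg_left (hξ k) (M0 _ _)

/-- Quantitative comparison, at a fixed tree, with the independent field: Lebowitz' inequality, where
pairs at distance at most `D` are bounded by `pair_near` and all the others by `pair_far`. -/
lemma finite_bound {V Ω : Type*} [Fintype V] [DecidableEq V] [MeasurableSpace Ω] {P : Measure Ω}
    [IsProbabilityMeasure P] {G : SimpleGraph V} [DecidableRel G.Adj] (hG : G.IsTree)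
    {r : ℕ} (hr : ∀ v, G.degree v ≤ r) {ρ : ℝ} (h0 : 0 ≤ ρ) (h1 : ρ ≤ 1 / 2)
    {Z : Ω → V → ℝ} (hZ : IsCenteredGaussianVector P Z (fun x y => ρ ^ G.dist x y))
    {u s₀ : ℝ} (hu : 0 ≤ u) (hs₀ : s₀ ≤ 1 / 3) {D : ℕ} (hD : ρ ^ D ≤ s₀) :
    |P.real {ω | ∀ x, Z ω x ≤ u} - (1 - gtail u) ^ Fintype.card V| ≤
      Fintype.card V * (((r + 1 : ℕ) : ℝ) ^ D * Real.exp (-(2 / 3) * u ^ 2) +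
        Fintype.card V * (gtail (3 * u) + gtail u * (gtail (u - 3 * s₀ * u) - gtail u))) := by
  have hZm := hZ.1
  have hμ : IsProbabilityMeasure (P.map Z) := Measure.isProbabilityMeasure_map hZm.aemeasurable
  set μ := P.map Z with hμdef
  have hA : Assoc μ := assoc_tree hG h0 (by linarith) hZ
  set F : V → (V → ℝ) → ℝ := fun x z => Set.indicator {z : V → ℝ | z x ≤ u} 1 z with hF
  have ms : ∀ x, MeasurableSet {z : V → ℝ | z x ≤ u} := fun x =>
    measurableSet_le (measurable_pi_apply x) measurable_const
  have ms' : ∀ x, MeasurableSet {z : V → ℝ | u < z x} := fun x =>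
    measurableSet_lt measurable_const (measurable_pi_apply x)
  have hleb := hA.lebowitz F (fun x z z' hz => by
      simp only [hF, Set.indicator_apply, Set.mem_ofPred_eq, Pi.one_apply]
      split_ifs with a b b <;> norm_num
      exact b ((hz x).trans a))
    (fun x => (measurable_const.indicator (ms x) : Measurable _))
    (fun x z => by simp only [hF, Set.indicator_apply, Pi.one_apply]; split_ifs <;> simp)
    Finset.univ
  have tailx : ∀ x, μ.real {z | u < z x} = gtail u := fun x => by
    rw [hμdef, map_measureReal_apply hZm (ms' x)]
    exact marginal_tail hZ (by simp) u
  have hcompl : ∀ x, {z : V → ℝ | z x ≤ u} = {z | u < z x}ᶜ := fun x => by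
    ext z; simp
  have intF : ∀ x, ∫ z, F x z ∂μ = 1 - gtail u := fun x => by
    rw [hF, integral_indicator_one (ms x), hcompl, probReal_compl_eq_one_sub (ms' x), tailx]
  have intFF : ∀ x y, ∫ z, F x z * F y z ∂μ =
      1 - 2 * gtail u + μ.real {z | u < z x ∧ u < z y} := by
    intro x y
    have e : (fun z => F x z * F y z) =
        Set.indicator ({z : V → ℝ | z x ≤ u} ∩ {z : V → ℝ | z y ≤ u}) 1 := by
      rw [hF, Set.inter_indicator_one]
      rfl
    rw [e, integral_indicator_one ((ms x).inter (ms y)), hcompl, hcompl, ← Set.compl_union,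
      probReal_compl_eq_one_sub ((ms' x).union (ms' y))]
    have := measureReal_union_add_inter (μ := μ) (s := {z : V → ℝ | u < z x}) (ms' y)
    rw [tailx, tailx] at this
    have e2 : {z : V → ℝ | u < z x ∧ u < z y} = {z | u < z x} ∩ {z | u < z y} := rfl
    rw [e2]
    linarith
  have intP : ∫ z, ∏ x, F x z ∂μ = P.real {ω | ∀ x, Z ω x ≤ u} := by
    have e : (fun z => ∏ x, F x z) = Set.indicator {z : V → ℝ | ∀ x, z x ≤ u} 1 := by
      funext z
      simp only [hF, Set.indicator_apply, Set.mem_ofPred_eq, Pi.one_apply]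
      rw [Finset.prod_ite_zero]
      simp
    have hms : MeasurableSet {z : V → ℝ | ∀ x, z x ≤ u} := by
      rw [Set.ofPred_forall]
      exact MeasurableSet.iInter ms
    rw [e, integral_indicator_one hms, hμdef, map_measureReal_apply hZm hms]
    rfl
  rw [intP] at hleb
  simp only [intF, intFF, Finset.prod_const, Finset.card_univ] at hleb
  refine hleb.trans ?_
  have hp : 0 ≤ gtail u := gtail_nonneg u
  have hpd : 0 ≤ gtail (u - 3 * s₀ * u) - gtail u := by
    have hs : 0 ≤ s₀ := (pow_nonneg h0 D).trans hD
    exact sub_nonneg.2 (gtail_anti (by nlinarith [mul_nonneg hs hu]))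
  set R := gtail (3 * u) + gtail u * (gtail (u - 3 * s₀ * u) - gtail u) with hR
  have hR0 : 0 ≤ R := add_nonneg (gtail_nonneg _) (mul_nonneg hp hpd)
  -- `R` is nonnegative, so it can be granted to the near pairs as well.
  have hpair : ∀ x y, x ≠ y → 1 - 2 * gtail u + μ.real {z | u < z x ∧ u < z y} -
      (1 - gtail u) * (1 - gtail u) ≤
      (if G.dist x y ≤ D then Real.exp (-(2 / 3) * u ^ 2) else 0) + R := by
    intro x y hxy
    have eμ : μ.real {z | u < z x ∧ u < z y} = P.real {ω | u < Z ω x ∧ u < Z ω y} := by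
      have hms : MeasurableSet {z : V → ℝ | u < z x ∧ u < z y} := (ms' x).inter (ms' y)
      rw [hμdef, map_measureReal_apply hZm hms]
      rfl
    rw [eμ]
    have hd := hG.connected.pos_dist_of_ne hxy
    split_ifs with hle
    · have := pair_near hZ (x := x) (y := y) (s := ρ ^ G.dist x y) (by simp) (by simp) rfl
        (by rw [SimpleGraph.dist_comm]) (pow_nonneg h0 _)
        ((pow_le_of_le_one h0 (by linarith) hd.ne').trans h1) hu
      nlinarith
    · have := pair_far hZ (x := x) (y := y) (s := ρ ^ G.dist x y) (s₀ := s₀) (by simp) (by simp) rfl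
        (by rw [SimpleGraph.dist_comm]) (pow_nonneg h0 _)
        ((pow_le_pow_of_le_one h0 (by linarith) (not_le.1 hle).le).trans hD) hs₀ hu
      rw [hR]
      nlinarith
  have hrow : ∀ x, ∑ y ∈ Finset.univ.erase x, (1 - 2 * gtail u + μ.real {z | u < z x ∧ u < z y} -
      (1 - gtail u) * (1 - gtail u)) ≤
      ((r + 1 : ℕ) : ℝ) ^ D * Real.exp (-(2 / 3) * u ^ 2) + Fintype.card V * R := by
    intro x
    calc _ ≤ ∑ y ∈ Finset.univ.erase x,
          ((if G.dist x y ≤ D then Real.exp (-(2 / 3) * u ^ 2) else 0) + R) :=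
          Finset.sum_le_sum fun y hy => hpair x y (Finset.ne_of_mem_erase hy).symm
      _ ≤ ∑ y, ((if G.dist x y ≤ D then Real.exp (-(2 / 3) * u ^ 2) else 0) + R) := by
          refine Finset.sum_le_sum_of_subset_of_nonneg (Finset.erase_subset _ _) fun y _ _ => ?_
          split_ifs <;> positivity
      _ = (Finset.univ.filter fun y => G.dist x y ≤ D).card * Real.exp (-(2 / 3) * u ^ 2) +
          Fintype.card V * R := by
          rw [Finset.sum_add_distrib, ← Finset.sum_filter]
          simp
      _ ≤ _ := by
          gcongr
          exact_mod_cast card_ball_le hG.connected hr x D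
  refine (Finset.sum_le_sum fun x _ => hrow x).trans (le_of_eq ?_)
  rw [Finset.sum_const, Finset.card_univ, nsmul_eq_mul]

/-! ### Passage to the limit -/

/-- The distance separating near from far pairs of vertices, logarithmic in `N`. The base
`(r + 1) ^ 6` makes a ball of this radius contain at most `N ^ (1 / 6)` vertices. -/
noncomputable def radius (r N : ℕ) : ℕ := Nat.log ((r + 1) ^ 6) N

lemma radius_pow_le (r : ℕ) {N : ℕ} (hN : N ≠ 0) :
    (((r + 1 : ℕ) : ℝ) ^ radius r N) ^ 6 ≤ N := by
  have := Nat.pow_log_le_self ((r + 1) ^ 6) hN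
  rw [← pow_mul, mul_comm, pow_mul] at this
  exact_mod_cast this

lemma log_le_radius {r : ℕ} (hr : 3 ≤ r) {N : ℕ} (hN : N ≠ 0) :
    Real.log N ≤ 6 * Real.log ((r + 1 : ℕ) : ℝ) * (radius r N + 1) := by
  have h1 : 1 < (r + 1) ^ 6 := Nat.one_lt_pow (by norm_num) (by omega)
  have := (Nat.lt_pow_succ_log_self h1 N).le
  have h2 : (N : ℝ) ≤ (((r + 1 : ℕ) : ℝ) ^ 6) ^ (radius r N + 1) := by exact_mod_cast this
  have h3 := Real.log_le_log (by positivity) h2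
  rw [Real.log_pow, Real.log_pow] at h3
  push_cast at h3 ⊢
  linarith

lemma radius_tendsto {r : ℕ} (hr : 3 ≤ r) : Tendsto (radius r) atTop atTop := by
  have h1 : 1 < (r + 1) ^ 6 := Nat.one_lt_pow (by norm_num) (by omega)
  refine tendsto_atTop.2 fun b => ?_
  filter_upwards [eventually_ge_atTop (((r + 1) ^ 6) ^ b)] with N hN
  exact Nat.le_log_of_pow_le h1 hN

lemma half_pow_radius_tendsto {r : ℕ} (hr : 3 ≤ r) :
    Tendsto (fun N => (1 / 2 : ℝ) ^ radius r N) atTop (nhds 0) :=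
  (tendsto_pow_atTop_nhds_zero_of_lt_one (by norm_num) (by norm_num)).comp (radius_tendsto hr)

lemma half_pow_mul_log_tendsto {r : ℕ} (hr : 3 ≤ r) :
    Tendsto (fun N : ℕ => (1 / 2 : ℝ) ^ radius r N * Real.log N) atTop (nhds 0) := by
  have h1 : Tendsto (fun n : ℕ => 6 * Real.log ((r + 1 : ℕ) : ℝ) *
      ((n : ℝ) * (1 / 2 : ℝ) ^ n + (1 / 2 : ℝ) ^ n)) atTop (nhds 0) := by
    have a := tendsto_self_mul_const_pow_of_lt_one (r := (1 / 2 : ℝ)) (by norm_num) (by norm_num)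
    have b := tendsto_pow_atTop_nhds_zero_of_lt_one (r := (1 / 2 : ℝ)) (by norm_num) (by norm_num)
    simpa using (a.add b).const_mul (6 * Real.log ((r + 1 : ℕ) : ℝ))
  refine squeeze_zero' ?_ ?_ (h1.comp (radius_tendsto hr))
  · exact Eventually.of_forall fun N => mul_nonneg (by positivity) (Real.log_natCast_nonneg N)
  · filter_upwards [eventually_ne_atTop 0] with N hN
    have := mul_le_mul_of_nonneg_left (log_le_radius hr hN)
      (by positivity : (0 : ℝ) ≤ (1 / 2) ^ radius r N)
    simp only [Function.comp]
    linarith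

/-- Far pairs have correlations that are a negative power of `N`, hence `o(1 / a_N²)`. -/
lemma half_pow_mul_aSeq_sq_tendsto {r : ℕ} (hr : 3 ≤ r) :
    Tendsto (fun N : ℕ => (1 / 2 : ℝ) ^ radius r N * aSeq N ^ 2) atTop (nhds 0) := by
  have h := (half_pow_mul_log_tendsto hr).mul ((aSeq_div_tendsto.pow 2).const_mul 2)
  rw [zero_mul] at h
  refine h.congr' ?_
  filter_upwards [sSeq_tendsto.eventually_gt_atTop 0] with N hN
  have := sSeq_sq (N := N)
  rw [show Real.log N = sSeq N ^ 2 / 2 by linarith]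
  field_simp

/-- For `u = a + t / a` and `s₀ = 2⁻ᴰ`, where `D = radius r N`, the threshold `u - 3 * s₀ * u` equals
`a + τ / a` with the sequence `τ` given here, so it has the same limiting exceedance number as `u`. -/
lemma shift_tendsto {r : ℕ} (hr : 3 ≤ r) (t : ℝ) :
    Tendsto (fun N : ℕ => t - 3 * ((1 / 2 : ℝ) ^ radius r N * aSeq N ^ 2 +
      (1 / 2 : ℝ) ^ radius r N * t)) atTop (nhds t) := by
  have := (((half_pow_mul_aSeq_sq_tendsto hr).add
    ((half_pow_radius_tendsto hr).mul_const t)).const_mul 3).const_sub t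
  simpa using this

lemma level_sq_ge (t : ℝ) :
    ∀ᶠ N : ℕ in atTop, 15 / 8 * Real.log N ≤ (aSeq N + t * (aSeq N)⁻¹) ^ 2 := by
  have h := (level_div_tendsto (tendsto_const_nhds (x := t))).pow 2
  rw [one_pow] at h
  filter_upwards [h.eventually_const_le (show (15 / 16 : ℝ) < 1 by norm_num),
    sSeq_tendsto.eventually_gt_atTop 0] with N h1 h2
  rw [div_pow, le_div_iff₀ (by positivity), sSeq_sq] at h1
  linarith

/-- There are at most `N ^ (7 / 6)` near pairs, each contributing `exp (-(2 / 3) * u ^ 2)`. As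
`u ^ 2 ≥ (15 / 8) * log N` eventually, the total is at most `N ^ (7 / 6 - 5 / 4)`. -/
lemma near_tendsto (r : ℕ) (t : ℝ) :
    Tendsto (fun N : ℕ => (N : ℝ) * (((r + 1 : ℕ) : ℝ) ^ radius r N *
      Real.exp (-(2 / 3) * (aSeq N + t * (aSeq N)⁻¹) ^ 2))) atTop (nhds 0) := by
  have hl : Tendsto (fun N : ℕ => Real.exp (-(1 / 12 * Real.log N))) atTop (nhds 0) :=
    Real.tendsto_exp_neg_atTop_nhds_zero.comp
      ((Real.tendsto_log_atTop.comp tendsto_natCast_atTop_atTop).const_mul_atTop (by norm_num))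
  refine squeeze_zero' (Eventually.of_forall fun N => by positivity) ?_ hl
  filter_upwards [level_sq_ge t, eventually_gt_atTop 0] with N h1 hN
  have hN' : (0 : ℝ) < N := by exact_mod_cast hN
  have hB : ((r + 1 : ℕ) : ℝ) ^ radius r N ≤ Real.exp (1 / 6 * Real.log N) := by
    have hp : (0 : ℝ) < ((r + 1 : ℕ) : ℝ) ^ radius r N := by positivity
    have := Real.log_le_log (by positivity) (radius_pow_le r hN.ne')
    rw [Real.log_pow] at this
    rw [← Real.log_le_iff_le_exp hp]
    push_cast at this ⊢
    linarith
  calc (N : ℝ) * (((r + 1 : ℕ) : ℝ) ^ radius r N *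
      Real.exp (-(2 / 3) * (aSeq N + t * (aSeq N)⁻¹) ^ 2))
      ≤ Real.exp (Real.log N) * (Real.exp (1 / 6 * Real.log N) *
        Real.exp (-(5 / 4) * Real.log N)) := by
        rw [Real.exp_log hN']
        gcongr ?_ * (?_ * Real.exp ?_)
        linarith
    _ = Real.exp (-(1 / 12 * Real.log N)) := by
        rw [← Real.exp_add, ← Real.exp_add]
        ring_nf

lemma far_tail_tendsto (t : ℝ) :
    Tendsto (fun N : ℕ => (N : ℝ) * (N * gtail (3 * (aSeq N + t * (aSeq N)⁻¹))))
      atTop (nhds 0) := by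
  have hl : Tendsto (fun N : ℕ => Real.exp (-(Real.log N))) atTop (nhds 0) :=
    Real.tendsto_exp_neg_atTop_nhds_zero.comp
      (Real.tendsto_log_atTop.comp tendsto_natCast_atTop_atTop)
  refine squeeze_zero' (Eventually.of_forall fun N =>
    mul_nonneg (by positivity) (mul_nonneg (by positivity) (gtail_nonneg _))) ?_ hl
  filter_upwards [level_sq_ge t, eventually_gt_atTop 0,
    (level_tendsto (tendsto_const_nhds (x := t))).eventually_ge_atTop 0] with N h1 hN hu
  have hN' : (0 : ℝ) < N := by exact_mod_cast hN
  have hlog : 0 ≤ Real.log N := Real.log_natCast_nonneg N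
  calc (N : ℝ) * (N * gtail (3 * (aSeq N + t * (aSeq N)⁻¹)))
      ≤ Real.exp (Real.log N) * (Real.exp (Real.log N) * Real.exp (-3 * Real.log N)) := by
        rw [Real.exp_log hN']
        gcongr
        refine (gtail_le_exp (by positivity)).trans (Real.exp_le_exp.2 ?_)
        rw [mul_pow]
        linarith
    _ = Real.exp (-(Real.log N)) := by
        rw [← Real.exp_add, ← Real.exp_add]
        ring_nf

/-- Gumbel limit for the maximum of the Gaussian free field on regular trees: if for each
`N ≥ 2` the graph `T_N` is a tree on `N` vertices of maximal degree at most `r ≥ 3`, and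
`Z^N` is a centered Gaussian vector with unit variances and covariances
`E[Z_x Z_y] = (r−1)^{−d(x,y)}`, then with `a_N, b_N = 1/a_N` as above,
`P(max_x Z_x ≤ a_N + t b_N) → exp(−e^{−t})` for every `t`. -/
theorem stmt_16 (r : ℕ) (hr : 3 ≤ r)
    (V : ℕ → Type*) [∀ N, Fintype (V N)] [∀ N, DecidableEq (V N)]
    (T : ∀ N, SimpleGraph (V N)) [∀ N, DecidableRel (T N).Adj]
    (hcard : ∀ N, 2 ≤ N → Fintype.card (V N) = N)
    (htree : ∀ N, 2 ≤ N → (T N).IsTree)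
    (hdeg : ∀ N, 2 ≤ N → ∀ v, (T N).degree v ≤ r)
    (Ω : ℕ → Type*) (mΩ : ∀ N, MeasurableSpace (Ω N))
    (P : ∀ N, Measure (Ω N)) (hP : ∀ N, IsProbabilityMeasure (P N))
    (Z : ∀ N, Ω N → V N → ℝ)
    (hGauss : ∀ N, 2 ≤ N →
      IsCenteredGaussianVector (P N) (Z N)
        (fun x y => (((r : ℝ) - 1) ^ (T N).dist x y)⁻¹))
    (t : ℝ) :
    Tendsto
      (fun N =>
        ((P N) {ω | ∀ x, Z N ω x ≤ aSeq N + t * (aSeq N)⁻¹}).toReal)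
      atTop (nhds (Real.exp (-Real.exp (-t)))) := by
  have hr3 : (3 : ℝ) ≤ r := by exact_mod_cast hr
  set ρ : ℝ := ((r : ℝ) - 1)⁻¹ with hρ
  have h0 : 0 ≤ ρ := inv_nonneg.2 (by linarith)
  have h1 : ρ ≤ 1 / 2 := by
    rw [hρ, one_div]
    exact inv_anti₀ (by norm_num) (by linarith)
  set u : ℕ → ℝ := fun N => aSeq N + t * (aSeq N)⁻¹ with hu
  set s : ℕ → ℝ := fun N => (1 / 2 : ℝ) ^ radius r N with hs
  have hut : Tendsto (fun N : ℕ => N * gtail (u N)) atTop (nhds (Real.exp (-t))) :=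
    gtail_level_tendsto tendsto_const_nhds
  have hvt : Tendsto (fun N : ℕ => N * gtail (u N - 3 * s N * u N)) atTop
      (nhds (Real.exp (-t))) := by
    refine (gtail_level_tendsto (shift_tendsto hr t)).congr' ?_
    filter_upwards [aSeq_tendsto.eventually_gt_atTop 0] with N hN
    congr 2
    simp only [hu, hs]
    field_simp
    ring
  have hmain : Tendsto (fun N : ℕ => (1 - gtail (u N)) ^ N) atTop
      (nhds (Real.exp (-Real.exp (-t)))) := by
    have := Real.tendsto_one_add_pow_exp_of_tendsto (g := fun N => -gtail (u N))
      (t := -Real.exp (-t)) (by simpa using hut.neg)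
    simpa [sub_eq_add_neg] using this
  have herr : Tendsto (fun N : ℕ => (N : ℝ) * (((r + 1 : ℕ) : ℝ) ^ radius r N *
      Real.exp (-(2 / 3) * u N ^ 2) + N * (gtail (3 * u N) + gtail (u N) *
        (gtail (u N - 3 * s N * u N) - gtail (u N))))) atTop (nhds 0) := by
    have := ((near_tendsto r t).add (far_tail_tendsto t)).add (hut.mul (hvt.sub hut))
    rw [sub_self, mul_zero, add_zero, add_zero] at this
    refine this.congr fun N => ?_
    simp only [hu]
    ring
  have hdiff : Tendsto (fun N : ℕ => (P N).real {ω | ∀ x, Z N ω x ≤ u N} -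
      (1 - gtail (u N)) ^ N) atTop (nhds 0) := by
    refine squeeze_zero_norm' ?_ herr
    filter_upwards [eventually_ge_atTop 2,
      (level_tendsto (tendsto_const_nhds (x := t))).eventually_ge_atTop 0,
      (half_pow_radius_tendsto hr).eventually_le_const (show (0 : ℝ) < 1 / 3 by norm_num)]
      with N hN hu0 hs0
    have := hP N
    have hG := hGauss N hN
    simp only [← inv_pow] at hG
    have := finite_bound (htree N hN) (hdeg N hN) h0 h1 hG hu0 hs0
      (pow_le_pow_left₀ h0 h1 (radius r N))
    rw [hcard N hN] at this
    exact this
  have := hdiff.add hmain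
  simp only [sub_add_cancel, zero_add] at this
  exact this
end
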